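/- arXiv:1608.06847 — 2 statements merged into one kernel-verified Lean document; each statement's English description precedes it below -/
import Mathlib

section
/- Let (a_n)_{n≥1} be a strictly increasing sequence of positive integers such that there exist constants γ > 0 and C > 0 with a_n ≤ C·e^{γ(log n)²} for all n ≥ 1, and assume that there exist κ ∈ [2,3] and C' > 0 such that the additive energy satisfies E({a_1, …, a_N}) ≤ C'·N^κ for all N ≥ 1. Then for Lebesgue-almost all real α, for every ε > 0 there are infinitely many N with N·D_N*({a_1 α}, …, {a_N α}) ≥ N^{(3−κ)/2 − ε}. -/
open Filter MeasureTheory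

/-- Star-discrepancy of the first `N` points `x 1, ..., x N` of a sequence in `[0,1)`. -/
noncomputable def starDisc (N : ℕ) (x : ℕ → ℝ) : ℝ :=
  ⨆ β : Set.Ioc (0:ℝ) 1,
    |(((Finset.Icc 1 N).filter fun n => 0 ≤ x n ∧ x n < (β : ℝ)).card : ℝ) / N - (β : ℝ)|

/-- Additive energy of a finite set of integers. -/
def addEnergy (A : Finset ℤ) : ℕ :=
  ((A ×ˢ A ×ˢ A ×ˢ A).filter fun p => p.1 - p.2.1 = p.2.2.1 - p.2.2.2).card

/-- The character `x ↦ exp (2 π i k x)`. -/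
noncomputable def trigChar (k : ℤ) (x : ℝ) : ℂ :=
  Complex.exp (2 * Real.pi * Complex.I * k * x)

lemma trigChar_zero (x : ℝ) : trigChar 0 x = 1 := by simp [trigChar]

lemma trigChar_add (k l : ℤ) (x : ℝ) :
    trigChar (k + l) x = trigChar k x * trigChar l x := by
  simp only [trigChar, ← Complex.exp_add]
  push_cast
  ring_nf

lemma conj_trigChar (k : ℤ) (x : ℝ) :
    (starRingEnd ℂ) (trigChar k x) = trigChar (-k) x := by
  rw [trigChar, trigChar, ← Complex.exp_conj]
  simp [Complex.conj_ofNat]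

lemma trigChar_mul_conj (k l : ℤ) (x : ℝ) :
    trigChar k x * (starRingEnd ℂ) (trigChar l x) = trigChar (k - l) x := by
  rw [conj_trigChar, ← trigChar_add, sub_eq_add_neg]

lemma norm_trigChar (k : ℤ) (x : ℝ) : ‖trigChar k x‖ = 1 := by
  have : (2 * Real.pi * Complex.I * k * x : ℂ) = ((2 * Real.pi * k * x : ℝ) : ℂ) * Complex.I := by
    push_cast; ring
  rw [trigChar, this, Complex.norm_exp_ofReal_mul_I]

@[fun_prop]
lemma continuous_trigChar (k : ℤ) : Continuous (trigChar k) := by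
  unfold trigChar
  fun_prop

lemma trigChar_natCast_mul (k : ℤ) (p : ℕ) (x : ℝ) :
    trigChar k (p * x) = trigChar (p * k) x := by
  simp only [trigChar]
  push_cast
  ring_nf

lemma trigChar_mul_fract (k : ℤ) (y : ℝ) : trigChar k (Int.fract y) = trigChar k y := by
  simp only [trigChar]
  rw [Complex.exp_eq_exp_iff_exists_int]
  refine ⟨-(k * ⌊y⌋), ?_⟩
  have : (y : ℂ) = (⌊y⌋ : ℂ) + (Int.fract y : ℝ) := by
    exact_mod_cast (Int.floor_add_fract y).symm
  rw [this]
  push_cast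
  ring

lemma hasDerivAt_trigChar (k : ℤ) (x : ℝ) :
    HasDerivAt (trigChar k) (2 * Real.pi * Complex.I * k * trigChar k x) x := by
  have h1 : HasDerivAt (fun y : ℝ => (2 * Real.pi * Complex.I * k * (y : ℂ)))
      (2 * Real.pi * Complex.I * k * 1) x :=
    (Complex.ofRealCLM.hasDerivAt (x := x)).const_mul _
  refine h1.cexp.congr_deriv ?_
  rw [trigChar]
  ring

lemma trigChar_one (k : ℤ) : trigChar k 1 = 1 := by
  rw [trigChar, Complex.exp_eq_one_iff]
  exact ⟨k, by push_cast; ring⟩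

lemma integral_trigChar (k : ℤ) :
    ∫ x in (0 : ℝ)..1, trigChar k x = if k = 0 then 1 else 0 := by
  split_ifs with hk
  · subst hk
    simp [trigChar_zero]
  · have hc : (2 * Real.pi * Complex.I * k : ℂ) ≠ 0 := by
      have : (k : ℂ) ≠ 0 := by exact_mod_cast hk
      simp [Real.pi_ne_zero, this]
    have h := intervalIntegral.integral_eq_sub_of_hasDerivAt (a := 0) (b := 1)
      (fun x _ => hasDerivAt_trigChar k x)
      (by apply Continuous.intervalIntegrable; fun_prop)
    rw [intervalIntegral.integral_const_mul, trigChar_one] at h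
    have h0 : trigChar k 0 = 1 := by simp [trigChar]
    rw [h0, sub_self] at h
    exact (mul_eq_zero.mp h).resolve_left hc

/-- Parseval's identity for an exponential sum with possibly repeated frequencies. -/
lemma integral_normSq_sum_trigChar {ι : Type*} (s : Finset ι) (c : ι → ℂ) (φ : ι → ℤ) :
    ∫ x in (0 : ℝ)..1, ‖∑ i ∈ s, c i * trigChar (φ i) x‖ ^ 2 =
      ∑ i ∈ s, ∑ j ∈ s, if φ i = φ j then (c i * (starRingEnd ℂ) (c j)).re else 0 := by
  have hpt : ∀ x : ℝ, ‖∑ i ∈ s, c i * trigChar (φ i) x‖ ^ 2 =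
      Complex.reCLM (∑ i ∈ s, ∑ j ∈ s,
        (c i * (starRingEnd ℂ) (c j)) * trigChar (φ i - φ j) x) := by
    intro x
    have h : (∑ i ∈ s, c i * trigChar (φ i) x) *
        (starRingEnd ℂ) (∑ i ∈ s, c i * trigChar (φ i) x) =
        ∑ i ∈ s, ∑ j ∈ s, (c i * (starRingEnd ℂ) (c j)) * trigChar (φ i - φ j) x := by
      rw [map_sum, Finset.sum_mul_sum]
      refine Finset.sum_congr rfl fun i _ => Finset.sum_congr rfl fun j _ => ?_
      rw [← trigChar_mul_conj, map_mul]
      ring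
    rw [← h, Complex.mul_conj, Complex.normSq_eq_norm_sq]
    simp only [Complex.reCLM_apply, Complex.ofReal_re]
  simp_rw [hpt]
  rw [ContinuousLinearMap.intervalIntegral_comp_comm _
    (by apply Continuous.intervalIntegrable; fun_prop)]
  rw [intervalIntegral.integral_finsetSum
    (fun i _ => by apply Continuous.intervalIntegrable; fun_prop), map_sum]
  refine Finset.sum_congr rfl fun i _ => ?_
  rw [intervalIntegral.integral_finsetSum
    (fun i _ => by apply Continuous.intervalIntegrable; fun_prop), map_sum]
  refine Finset.sum_congr rfl fun j _ => ?_
  rw [intervalIntegral.integral_const_mul, integral_trigChar]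
  simp only [sub_eq_zero]
  split_ifs <;> simp

lemma integral_normSq_sum_trigChar_self (s : Finset ℤ) (c : ℤ → ℂ) :
    ∫ x in (0 : ℝ)..1, ‖∑ j ∈ s, c j * trigChar j x‖ ^ 2 = ∑ j ∈ s, ‖c j‖ ^ 2 := by
  rw [integral_normSq_sum_trigChar s c (fun j => j)]
  refine Finset.sum_congr rfl fun i hi => ?_
  rw [Finset.sum_ite_eq, if_pos hi, Complex.mul_conj, Complex.normSq_eq_norm_sq, Complex.ofReal_re]

/-- If every frequency is attained at most `L` times, the mean square of an exponential sum is at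
most `L` times the sum of the squared coefficients. -/
lemma integral_normSq_sum_trigChar_le {ι : Type*} (s : Finset ι) (c : ι → ℂ) (φ : ι → ℤ) (L : ℕ)
    (hL : ∀ i ∈ s, (s.filter fun j => φ i = φ j).card ≤ L) :
    ∫ x in (0 : ℝ)..1, ‖∑ i ∈ s, c i * trigChar (φ i) x‖ ^ 2 ≤ L * ∑ i ∈ s, ‖c i‖ ^ 2 := by
  rw [integral_normSq_sum_trigChar]
  have hsymm : ∑ i ∈ s, ∑ j ∈ s, (if φ i = φ j then ‖c j‖ ^ 2 else 0) =
      ∑ i ∈ s, ∑ j ∈ s, (if φ i = φ j then ‖c i‖ ^ 2 else 0) := by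
    rw [Finset.sum_comm]
    simp only [eq_comm]
  have hdiag : ∑ i ∈ s, ∑ j ∈ s, (if φ i = φ j then ‖c i‖ ^ 2 else 0) ≤
      L * ∑ i ∈ s, ‖c i‖ ^ 2 := by
    rw [Finset.mul_sum]
    refine Finset.sum_le_sum fun i hi => ?_
    rw [← Finset.sum_filter, Finset.sum_const, nsmul_eq_mul]
    exact mul_le_mul_of_nonneg_right (by exact_mod_cast hL i hi) (by positivity)
  have hmain : ∑ i ∈ s, ∑ j ∈ s,
      (if φ i = φ j then (c i * (starRingEnd ℂ) (c j)).re else 0) ≤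
      ∑ i ∈ s, ∑ j ∈ s, ((if φ i = φ j then ‖c i‖ ^ 2 else 0) / 2 +
        (if φ i = φ j then ‖c j‖ ^ 2 else 0) / 2) := by
    refine Finset.sum_le_sum fun i _ => Finset.sum_le_sum fun j _ => ?_
    split_ifs
    · have h1 : (c i * (starRingEnd ℂ) (c j)).re ≤ ‖c i‖ * ‖c j‖ := by
        refine (Complex.re_le_norm _).trans ?_
        simp
      nlinarith [sq_nonneg (‖c i‖ - ‖c j‖)]
    · simp
  simp only [Finset.sum_add_distrib, ← Finset.sum_div, hsymm] at hmain
  linarith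

/-- Trigonometric polynomials of degree at most `J`. -/
noncomputable def trigSpan (J : ℕ) : Submodule ℂ (ℝ → ℂ) :=
  Submodule.span ℂ (trigChar '' (Finset.Icc (-(J : ℤ)) J : Finset ℤ))

lemma trigChar_mem_trigSpan {J : ℕ} {k : ℤ} (hk : |k| ≤ J) : trigChar k ∈ trigSpan J := by
  refine Submodule.subset_span ⟨k, ?_, rfl⟩
  simpa [abs_le] using hk

lemma one_mem_trigSpan (J : ℕ) : (1 : ℝ → ℂ) ∈ trigSpan J := by
  have h : (1 : ℝ → ℂ) = trigChar 0 := by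
    funext x
    simp [trigChar_zero]
  rw [h]
  exact trigChar_mem_trigSpan (by simp)

lemma mul_mem_trigSpan {J K : ℕ} {f g : ℝ → ℂ} (hf : f ∈ trigSpan J) (hg : g ∈ trigSpan K) :
    f * g ∈ trigSpan (J + K) := by
  have h := Submodule.mul_mem_mul hf hg
  rw [trigSpan, trigSpan, Submodule.span_mul_span] at h
  refine Submodule.span_le.mpr ?_ h
  rintro _ ⟨_, ⟨k, hk, rfl⟩, _, ⟨l, hl, rfl⟩, rfl⟩
  have hkl : trigChar k * trigChar l = trigChar (k + l) := by
    funext x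
    simp [trigChar_add]
  simp only [hkl]
  refine trigChar_mem_trigSpan ?_
  simp only [Finset.coe_Icc, Set.mem_Icc] at hk hl
  rw [abs_le]
  push_cast
  omega

lemma pow_mem_trigSpan {J : ℕ} {f : ℝ → ℂ} (hf : f ∈ trigSpan J) (d : ℕ) :
    f ^ d ∈ trigSpan (d * J) := by
  induction d with
  | zero => simpa using one_mem_trigSpan 0
  | succ d ih =>
    rw [pow_succ, Nat.succ_mul]
    exact mul_mem_trigSpan ih hf

lemma exists_eq_sum_of_mem_trigSpan {J : ℕ} {f : ℝ → ℂ} (hf : f ∈ trigSpan J) :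
    ∃ c : ℤ → ℂ, ∀ x, f x = ∑ j ∈ Finset.Icc (-(J : ℤ)) J, c j * trigChar j x := by
  rw [trigSpan, Submodule.mem_span_image_finset_iff_exists_fun'] at hf
  obtain ⟨c, hc⟩ := hf
  refine ⟨c, fun x => ?_⟩
  rw [← hc]
  simp

/-- A positive integer has at most `log₂ n` prime divisors. -/
lemma card_filter_prime_dvd_le (P : Finset ℕ) (hP : ∀ p ∈ P, p.Prime) {n M : ℕ} (hn : n ≠ 0)
    (hM : n ≤ M) : (P.filter fun p => p ∣ n).card ≤ Nat.log 2 M := by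
  refine Nat.le_log_of_pow_le (by norm_num) (le_trans ?_ hM)
  have hsub : (P.filter fun p => p ∣ n) ⊆ n.primeFactors := by
    intro p hp
    rw [Finset.mem_filter] at hp
    exact Nat.mem_primeFactors.mpr ⟨hP p hp.1, hp.2, hn⟩
  calc 2 ^ (P.filter fun p => p ∣ n).card
      ≤ ∏ p ∈ P.filter fun p => p ∣ n, p :=
        Finset.pow_card_le_prod _ _ _ fun p hp => (hP p (Finset.mem_filter.mp hp).1).two_le
    _ ≤ ∏ p ∈ n.primeFactors, p :=
        Finset.prod_le_prod_of_subset_of_one_le' hsub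
          fun p hp _ => (Nat.prime_of_mem_primeFactors hp).one_le
    _ ≤ n := Nat.le_of_dvd (Nat.pos_of_ne_zero hn) (Nat.prod_primeFactors_dvd n)

/-- Variance bound for the dilates of a trigonometric polynomial by distinct primes. -/
lemma integral_sq_sum_dilates_sub_le {J : ℕ} {f : ℝ → ℝ}
    (hf : (fun x => (f x : ℂ)) ∈ trigSpan J) {H : ℕ} (P : Finset ℕ) (hP : ∀ p ∈ P, p.Prime)
    (hPH : ∀ p ∈ P, p ≤ H) :
    ∫ x in (0 : ℝ)..1, (∑ p ∈ P, f (p * x) - P.card * ∫ y in (0 : ℝ)..1, f y) ^ 2 ≤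
      Nat.log 2 (H * J) * (P.card * ∫ y in (0 : ℝ)..1, f y ^ 2) := by
  obtain ⟨c, hc⟩ := exists_eq_sum_of_mem_trigSpan hf
  set s := Finset.Icc (-(J : ℤ)) J with hs
  have hmean : ((∫ y in (0 : ℝ)..1, f y : ℝ) : ℂ) = c 0 := by
    rw [← intervalIntegral.integral_ofReal]
    simp_rw [hc]
    rw [intervalIntegral.integral_finsetSum
      (fun i _ => by apply Continuous.intervalIntegrable; fun_prop)]
    simp_rw [intervalIntegral.integral_const_mul, integral_trigChar]
    simp [hs]
  have hsq : ∫ y in (0 : ℝ)..1, f y ^ 2 = ∑ j ∈ s, ‖c j‖ ^ 2 := by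
    rw [← integral_normSq_sum_trigChar_self]
    simp_rw [← hc]
    simp
  have hexp : ∀ x : ℝ, (∑ p ∈ P, f (p * x) - P.card * ∫ y in (0 : ℝ)..1, f y) ^ 2 =
      ‖∑ q ∈ P ×ˢ s.erase 0, c q.2 * trigChar (q.1 * q.2) x‖ ^ 2 := by
    intro x
    have h0 : (0 : ℤ) ∈ s := by simp [hs]
    have : ((∑ p ∈ P, f (p * x) - P.card * ∫ y in (0 : ℝ)..1, f y : ℝ) : ℂ) =
        ∑ q ∈ P ×ˢ s.erase 0, c q.2 * trigChar (q.1 * q.2) x := by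
      rw [Finset.sum_product]
      rw [Complex.ofReal_sub, Complex.ofReal_mul, hmean, Complex.ofReal_sum]
      simp_rw [hc, trigChar_natCast_mul]
      simp_rw [← Finset.add_sum_erase _ _ h0, Finset.sum_add_distrib]
      simp [trigChar_zero]
    rw [← this, Complex.norm_real, Real.norm_eq_abs, sq_abs]
  simp_rw [hexp]
  refine (integral_normSq_sum_trigChar_le (P ×ˢ s.erase 0) (fun q => c q.2)
    (fun q => (q.1 : ℤ) * q.2) (Nat.log 2 (H * J)) ?_).trans ?_
  · rintro ⟨p, j⟩ hpj
    simp only [Finset.mem_product, Finset.mem_erase, hs, Finset.mem_Icc] at hpj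
    obtain ⟨hp, hj0, hj⟩ := hpj
    have hn : ((p : ℤ) * j).natAbs ≠ 0 := by
      simp [hj0, (hP p hp).ne_zero]
    have hle : ((p : ℤ) * j).natAbs ≤ H * J := by
      rw [Int.natAbs_mul, Int.natAbs_natCast]
      exact Nat.mul_le_mul (hPH p hp) (by omega)
    refine le_trans ?_ (card_filter_prime_dvd_le P hP hn hle)
    refine Finset.card_le_card_of_injOn Prod.fst ?_ ?_
    · rintro ⟨q, l⟩ hq
      simp only [Finset.coe_filter, Finset.mem_product, Set.mem_ofPred_eq] at hq ⊢
      refine ⟨hq.1.1, ?_⟩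
      rw [hq.2, Int.natAbs_mul, Int.natAbs_natCast]
      exact dvd_mul_right _ _
    · rintro ⟨q, l⟩ hq ⟨q', l'⟩ hq' (rfl : q = q')
      simp only [Finset.coe_filter, Finset.mem_product, Set.mem_ofPred_eq] at hq hq'
      have hq0 : (q : ℤ) ≠ 0 := by exact_mod_cast (hP q hq.1.1).ne_zero
      have := mul_left_cancel₀ hq0 (hq.2.symm.trans hq'.2)
      rw [this]
  · refine mul_le_mul_of_nonneg_left ?_ (by positivity)
    rw [Finset.sum_product]
    simp only [Finset.sum_const, nsmul_eq_mul, hsq]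
    exact mul_le_mul_of_nonneg_left
      (Finset.sum_le_sum_of_subset_of_nonneg (Finset.erase_subset _ _)
        fun _ _ _ => by positivity) (by positivity)

lemma abs_card_sub_le_starDisc (N : ℕ) (x : ℕ → ℝ) (hx : ∀ n, 0 ≤ x n) {β : ℝ}
    (hβ : β ∈ Set.Ioc (0 : ℝ) 1) :
    |(((Finset.Icc 1 N).filter fun n => x n < β).card : ℝ) - N * β| ≤ N * starDisc N x := by
  rcases Nat.eq_zero_or_pos N with rfl | hN
  · simp
  have hNR : (0 : ℝ) < N := by exact_mod_cast hN
  have hbdd : BddAbove (Set.range fun β : Set.Ioc (0 : ℝ) 1 =>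
      |(((Finset.Icc 1 N).filter fun n => 0 ≤ x n ∧ x n < (β : ℝ)).card : ℝ) / N - (β : ℝ)|) := by
    refine ⟨1, ?_⟩
    rintro _ ⟨⟨b, hb0, hb1⟩, rfl⟩
    have hcard : (((Finset.Icc 1 N).filter fun n => 0 ≤ x n ∧ x n < b).card : ℝ) ≤ N := by
      exact_mod_cast (Finset.card_filter_le _ _).trans (by simp)
    have h1 : (((Finset.Icc 1 N).filter fun n => 0 ≤ x n ∧ x n < b).card : ℝ) / N ≤ 1 :=
      (div_le_one hNR).mpr hcard
    have h0 : 0 ≤ (((Finset.Icc 1 N).filter fun n => 0 ≤ x n ∧ x n < b).card : ℝ) / N := by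
      positivity
    simp only [abs_le]
    constructor <;> linarith
  have hle := le_ciSup hbdd ⟨β, hβ⟩
  simp only [hx, true_and] at hle
  have heq : (((Finset.Icc 1 N).filter fun n => x n < β).card : ℝ) - N * β =
      N * ((((Finset.Icc 1 N).filter fun n => x n < β).card : ℝ) / N - β) := by
    field_simp
  rw [heq, abs_mul, abs_of_pos hNR]
  refine mul_le_mul_of_nonneg_left ?_ hNR.le
  simpa only [starDisc, hx, true_and] using hle

/-- Koksma's inequality for a character, with the star-discrepancy. -/
lemma norm_sum_trigChar_le_starDisc (N : ℕ) {h : ℕ} (hh : h ≠ 0) (x : ℕ → ℝ)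
    (hx : ∀ n, x n ∈ Set.Ico (0 : ℝ) 1) :
    ‖∑ n ∈ Finset.Icc 1 N, trigChar h (x n)‖ ≤ 2 * Real.pi * h * (N * starDisc N x) := by
  set g : ℝ → ℂ := fun β => 2 * Real.pi * Complex.I * (h : ℤ) * trigChar h β with hg
  have hgc : Continuous g := by fun_prop
  have hchar : ∀ n, trigChar h (x n) = 1 - ∫ β in (0 : ℝ)..1, if x n < β then g β else 0 := by
    intro n
    have h1 := intervalIntegral.integral_eq_sub_of_hasDerivAt (a := x n) (b := 1)
      (fun y _ => hasDerivAt_trigChar h y) (hgc.intervalIntegrable _ _)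
    have h2 : ∫ β in (0 : ℝ)..1, (if x n < β then g β else 0) = ∫ β in (x n)..1, g β := by
      rw [intervalIntegral.integral_of_le zero_le_one, intervalIntegral.integral_of_le (hx n).2.le]
      have : (fun β => if x n < β then g β else 0) = (Set.Ioi (x n)).indicator g := by
        funext β
        simp [Set.indicator_apply]
      rw [this, setIntegral_indicator measurableSet_Ioi, Set.Ioc_inter_Ioi,
        max_eq_right (hx n).1]
    rw [h2, h1, trigChar_one]
    ring
  have hintegral : ∀ n, IntervalIntegrable (fun β => if x n < β then g β else 0) volume 0 1 := by
    intro n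
    have : (fun β => if x n < β then g β else 0) = (Set.Ioi (x n)).indicator g := by
      funext β
      simp [Set.indicator_apply]
    rw [this, intervalIntegrable_iff_integrableOn_Ioc_of_le zero_le_one]
    exact ((intervalIntegrable_iff_integrableOn_Ioc_of_le zero_le_one).mp
      (hgc.intervalIntegrable 0 1)).indicator measurableSet_Ioi
  have hlin : ∫ β in (0 : ℝ)..1, (β : ℂ) * g β = 1 := by
    have hder : ∀ y : ℝ, HasDerivAt (fun y : ℝ => (y : ℂ) * trigChar h y)
        (1 * trigChar h y + y * g y) y := fun y =>
      (Complex.ofRealCLM.hasDerivAt (x := y)).mul (hasDerivAt_trigChar h y)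
    have h1 := intervalIntegral.integral_eq_sub_of_hasDerivAt (a := 0) (b := 1)
      (fun y _ => hder y) (by apply Continuous.intervalIntegrable; fun_prop)
    rw [intervalIntegral.integral_add (by apply Continuous.intervalIntegrable; fun_prop)
      (by apply Continuous.intervalIntegrable; fun_prop)] at h1
    simp only [one_mul] at h1
    rw [integral_trigChar, if_neg (by exact_mod_cast hh), trigChar_one] at h1
    simpa using h1
  have hsum : ∑ n ∈ Finset.Icc 1 N, trigChar h (x n) =
      ∫ β in (0 : ℝ)..1, ((N * β : ℂ) * g β -
        ∑ n ∈ Finset.Icc 1 N, if x n < β then g β else 0) := by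
    have hcont : Continuous fun β : ℝ => (N * β : ℂ) * g β := by fun_prop
    have hsumint : IntervalIntegrable
        (fun β => ∑ n ∈ Finset.Icc 1 N, if x n < β then g β else 0) volume 0 1 := by
      simpa only [Finset.sum_fn] using
        IntervalIntegrable.sum (Finset.Icc 1 N) fun n _ => hintegral n
    rw [intervalIntegral.integral_sub (hcont.intervalIntegrable 0 1) hsumint,
      intervalIntegral.integral_finsetSum fun n _ => hintegral n]
    simp_rw [mul_assoc]
    rw [intervalIntegral.integral_const_mul, hlin]
    simp_rw [hchar]
    rw [Finset.sum_sub_distrib]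
    simp
  rw [hsum]
  refine (intervalIntegral.norm_integral_le_of_norm_le_const
    (C := 2 * Real.pi * h * (N * starDisc N x)) fun β hβ => ?_).trans (by simp)
  rw [Set.uIoc_of_le zero_le_one] at hβ
  have hfac : (N * β : ℂ) * g β - ∑ n ∈ Finset.Icc 1 N, (if x n < β then g β else 0) =
      -((((((Finset.Icc 1 N).filter fun n => x n < β).card : ℝ) - N * β : ℝ)) : ℂ) * g β := by
    rw [← Finset.sum_filter, Finset.sum_const, nsmul_eq_mul]
    push_cast
    ring
  have hgn : ‖g β‖ = 2 * Real.pi * h := by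
    simp [hg, norm_trigChar, abs_of_pos Real.pi_pos]
  rw [hfac, norm_mul, norm_neg, Complex.norm_real, Real.norm_eq_abs, hgn, mul_comm]
  exact mul_le_mul_of_nonneg_left (abs_card_sub_le_starDisc N x (fun n => (hx n).1) hβ)
    (by positivity)

/-- Outside a small set, some prime dilate of a trigonometric polynomial with values in `[0, 1]`
exceeds half its mean. -/
lemma volume_forall_dilate_le {J : ℕ} {f : ℝ → ℝ} (hfc : Continuous f)
    (hf : (fun x => (f x : ℂ)) ∈ trigSpan J) (hf0 : ∀ x, 0 ≤ f x) (hf1 : ∀ x, f x ≤ 1)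
    (hm : 0 < ∫ y in (0 : ℝ)..1, f y) {H : ℕ} (P : Finset ℕ) (hP : ∀ p ∈ P, p.Prime)
    (hPH : ∀ p ∈ P, p ≤ H) (hPc : P.Nonempty) :
    volume {x ∈ Set.Ioc (0 : ℝ) 1 | ∀ p ∈ P, f (p * x) ≤ (∫ y in (0 : ℝ)..1, f y) / 2} ≤
      ENNReal.ofReal (4 * Nat.log 2 (H * J) / (P.card * ∫ y in (0 : ℝ)..1, f y)) := by
  set m := ∫ y in (0 : ℝ)..1, f y with hm_def
  have hcard : (0 : ℝ) < P.card := by exact_mod_cast hPc.card_pos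
  set F : ℝ → ℝ := fun x => (∑ p ∈ P, f (p * x) - P.card * m) ^ 2 with hF
  have hFc : Continuous F := by fun_prop
  have hsq : ∫ y in (0 : ℝ)..1, f y ^ 2 ≤ m := by
    refine intervalIntegral.integral_mono_on zero_le_one
      ((hfc.pow 2).intervalIntegrable _ _) (hfc.intervalIntegrable _ _) fun x _ => ?_
    nlinarith [hf0 x, hf1 x]
  have hvar : ∫ x in (0 : ℝ)..1, F x ≤ Nat.log 2 (H * J) * (P.card * m) :=
    (integral_sq_sum_dilates_sub_le hf P hP hPH).trans (by gcongr)
  have hcheb := mul_meas_ge_le_integral_of_nonneg (μ := volume.restrict (Set.Ioc (0 : ℝ) 1))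
    (f := F) (Eventually.of_forall fun x => sq_nonneg _)
    ((intervalIntegrable_iff_integrableOn_Ioc_of_le zero_le_one).mp (hFc.intervalIntegrable 0 1))
    ((P.card * m / 2) ^ 2)
  rw [← intervalIntegral.integral_of_le zero_le_one] at hcheb
  have hsub : {x ∈ Set.Ioc (0 : ℝ) 1 | ∀ p ∈ P, f (p * x) ≤ m / 2} ⊆
      {x | (P.card * m / 2) ^ 2 ≤ F x} ∩ Set.Ioc (0 : ℝ) 1 := by
    rintro x ⟨hx, hbad⟩
    refine ⟨?_, hx⟩
    have hs : ∑ p ∈ P, f (p * x) ≤ P.card * (m / 2) := by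
      rw [← nsmul_eq_mul]
      exact Finset.sum_le_card_nsmul _ _ _ hbad
    have hpos : 0 < P.card * m := by positivity
    change (P.card * m / 2) ^ 2 ≤ (∑ p ∈ P, f (p * x) - P.card * m) ^ 2
    nlinarith
  refine (measure_mono hsub).trans ?_
  rw [← Measure.restrict_apply' measurableSet_Ioc]
  refine (ENNReal.le_ofReal_iff_toReal_le (measure_ne_top _ _) (by positivity)).mpr ?_
  rw [le_div_iff₀ (by positivity)]
  have hpos : 0 < P.card * m := by positivity
  have h3 := hcheb.trans hvar
  rw [Measure.real] at h3
  set V := ((volume.restrict (Set.Ioc (0 : ℝ) 1)) {x | (P.card * m / 2) ^ 2 ≤ F x}).toReal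
  refine le_of_mul_le_mul_right ?_ hpos
  nlinarith

/-- The exponential sum with frequencies in `A`. -/
noncomputable def expSum (A : Finset ℤ) (x : ℝ) : ℂ := ∑ k ∈ A, trigChar k x

@[fun_prop]
lemma continuous_expSum (A : Finset ℤ) : Continuous (expSum A) := by
  unfold expSum
  fun_prop

lemma norm_expSum_le (A : Finset ℤ) (x : ℝ) : ‖expSum A x‖ ≤ A.card := by
  refine (norm_sum_le _ _).trans ?_
  simp [norm_trigChar]

lemma ofReal_norm_expSum_sq (A : Finset ℤ) (x : ℝ) :
    ((‖expSum A x‖ ^ 2 : ℝ) : ℂ) = ∑ q ∈ A ×ˢ A, trigChar (q.1 - q.2) x := by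
  rw [← Complex.normSq_eq_norm_sq, ← Complex.mul_conj, expSum, map_sum, Finset.sum_mul_sum,
    Finset.sum_product]
  simp_rw [trigChar_mul_conj]

lemma integral_norm_expSum_sq (A : Finset ℤ) :
    ∫ x in (0 : ℝ)..1, ‖expSum A x‖ ^ 2 = A.card := by
  have h := integral_normSq_sum_trigChar_self A (fun _ => 1)
  simpa [expSum] using h

lemma integral_norm_expSum_pow_four (A : Finset ℤ) :
    ∫ x in (0 : ℝ)..1, ‖expSum A x‖ ^ 4 = addEnergy A := by
  have h := integral_normSq_sum_trigChar (A ×ˢ A) (fun _ => 1) (fun q => q.1 - q.2)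
  have hpt : ∀ x : ℝ, ‖∑ q ∈ A ×ˢ A, (1 : ℂ) * trigChar (q.1 - q.2) x‖ ^ 2 =
      ‖expSum A x‖ ^ 4 := by
    intro x
    simp_rw [one_mul]
    rw [← ofReal_norm_expSum_sq, Complex.norm_real, Real.norm_eq_abs, sq_abs]
    ring
  simp_rw [hpt] at h
  rw [h, addEnergy, Finset.card_filter]
  simp_rw [Finset.sum_product]
  push_cast
  simp

/-- A polynomial smoothing of the indicator function of `{x | N / 2 ^ k ≤ ‖expSum A x‖}`, where
`N` is the cardinality of `A`. -/
noncomputable def levelFun (A : Finset ℤ) (k r : ℕ) (x : ℝ) : ℝ :=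
  (1 - (1 - ‖expSum A x‖ ^ 2 / A.card ^ 2) ^ 4 ^ k) ^ r

@[fun_prop]
lemma continuous_levelFun (A : Finset ℤ) (k r : ℕ) : Continuous (levelFun A k r) := by
  unfold levelFun
  fun_prop

lemma norm_expSum_sq_div_mem (A : Finset ℤ) (x : ℝ) :
    ‖expSum A x‖ ^ 2 / (A.card : ℝ) ^ 2 ∈ Set.Icc (0 : ℝ) 1 := by
  refine ⟨by positivity, div_le_one_of_le₀ ?_ (by positivity)⟩
  exact pow_le_pow_left₀ (norm_nonneg _) (norm_expSum_le A x) 2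

lemma one_sub_one_sub_pow_mem {y : ℝ} (hy : y ∈ Set.Icc (0 : ℝ) 1) (d : ℕ) :
    1 - (1 - y) ^ d ∈ Set.Icc (0 : ℝ) 1 := by
  have h0 : 0 ≤ (1 - y) ^ d := pow_nonneg (by linarith [hy.2]) d
  have h1 : (1 - y) ^ d ≤ 1 := pow_le_one₀ (by linarith [hy.2]) (by linarith [hy.1])
  exact ⟨by linarith, by linarith⟩

lemma levelFun_nonneg (A : Finset ℤ) (k r : ℕ) (x : ℝ) : 0 ≤ levelFun A k r x :=
  pow_nonneg (one_sub_one_sub_pow_mem (norm_expSum_sq_div_mem A x) _).1 r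

lemma levelFun_le_one (A : Finset ℤ) (k r : ℕ) (x : ℝ) : levelFun A k r x ≤ 1 :=
  pow_le_one₀ (one_sub_one_sub_pow_mem (norm_expSum_sq_div_mem A x) _).1
    (one_sub_one_sub_pow_mem (norm_expSum_sq_div_mem A x) _).2

lemma levelFun_le (A : Finset ℤ) (k r : ℕ) (x : ℝ) :
    levelFun A k r x ≤ (‖expSum A x‖ ^ 2 / (A.card / 2 ^ k) ^ 2) ^ r := by
  refine pow_le_pow_left₀ (one_sub_one_sub_pow_mem (norm_expSum_sq_div_mem A x) _).1 ?_ r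
  have hy := norm_expSum_sq_div_mem A x
  have hb := one_add_mul_le_pow (a := -(‖expSum A x‖ ^ 2 / (A.card : ℝ) ^ 2))
    (by linarith [hy.2]) (4 ^ k)
  have h4 : (4 : ℝ) ^ k = (2 ^ k) ^ 2 := by rw [← pow_mul, mul_comm, pow_mul]; norm_num
  have heq : ‖expSum A x‖ ^ 2 / (A.card / 2 ^ k : ℝ) ^ 2 =
      4 ^ k * (‖expSum A x‖ ^ 2 / (A.card : ℝ) ^ 2) := by
    rw [h4, div_pow, div_div_eq_mul_div]
    ring
  rw [heq]
  push_cast at hb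
  rw [← sub_eq_add_neg] at hb
  linarith

lemma le_levelFun (A : Finset ℤ) (hA : A.Nonempty) (k r : ℕ) {x : ℝ}
    (hx : A.card / 2 ^ k ≤ ‖expSum A x‖) : (1 / 2 : ℝ) ^ r ≤ levelFun A k r x := by
  refine pow_le_pow_left₀ (by norm_num) ?_ r
  have hy := norm_expSum_sq_div_mem A x
  set y := ‖expSum A x‖ ^ 2 / (A.card : ℝ) ^ 2 with hy_def
  have hcard : (0 : ℝ) < A.card := by exact_mod_cast hA.card_pos
  have h4 : (4 : ℝ) ^ k = (2 ^ k) ^ 2 := by rw [← pow_mul, mul_comm, pow_mul]; norm_num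
  have hdy : 1 ≤ (4 : ℝ) ^ k * y := by
    rw [div_le_iff₀ (by positivity)] at hx
    rw [hy_def, h4, ← mul_div_assoc, le_div_iff₀ (by positivity), one_mul, ← mul_pow]
    exact pow_le_pow_left₀ hcard.le (by linarith) 2
  have h1 : (1 - y) ^ 4 ^ k ≤ Real.exp (-1) := by
    calc (1 - y) ^ 4 ^ k ≤ Real.exp (-y) ^ 4 ^ k :=
          pow_le_pow_left₀ (by linarith [hy.2]) (by linarith [Real.add_one_le_exp (-y)]) _
      _ = Real.exp (-(4 ^ k * y)) := by
          rw [← Real.exp_nat_mul]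
          push_cast
          ring_nf
      _ ≤ Real.exp (-1) := Real.exp_le_exp.mpr (by linarith)
  have h2 : Real.exp (-1) ≤ 1 / 2 := by
    rw [Real.exp_neg, ← one_div]
    exact one_div_le_one_div_of_le (by norm_num) (by linarith [Real.add_one_le_exp 1])
  linarith

lemma levelFun_mem_trigSpan (A : Finset ℤ) (k r M : ℕ) (hA : ∀ n ∈ A, 0 ≤ n ∧ n ≤ M) :
    (fun x => (levelFun A k r x : ℂ)) ∈ trigSpan (r * (4 ^ k * M)) := by
  have hS : (fun x => ((‖expSum A x‖ ^ 2 : ℝ) : ℂ)) ∈ trigSpan M := by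
    simp_rw [ofReal_norm_expSum_sq]
    have : (fun x => ∑ q ∈ A ×ˢ A, trigChar (q.1 - q.2) x) =
        ∑ q ∈ A ×ˢ A, trigChar (q.1 - q.2) := by
      funext x
      simp
    rw [this]
    refine Submodule.sum_mem _ fun q hq => trigChar_mem_trigSpan ?_
    rw [Finset.mem_product] at hq
    have h1 := hA _ hq.1
    have h2 := hA _ hq.2
    rw [abs_le]
    omega
  have hbase : 1 - (((A.card : ℂ) ^ 2)⁻¹ • fun x => ((‖expSum A x‖ ^ 2 : ℝ) : ℂ)) ∈ trigSpan M :=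
    Submodule.sub_mem _ (one_mem_trigSpan M) (Submodule.smul_mem _ _ hS)
  have h := pow_mem_trigSpan (Submodule.sub_mem _ (one_mem_trigSpan _)
    (pow_mem_trigSpan hbase (4 ^ k))) r
  convert h using 1
  funext x
  simp [levelFun, div_eq_inv_mul]

/-- A real number in `(√N / 2, N]` lies in a dyadic interval `[N / 2 ^ k, 2 N / 2 ^ k)` with
`k` at most logarithmic in `N`. -/
lemma exists_dyadic_level {N : ℕ} (hN : 0 < N) {z : ℝ} (hz0 : 0 < z) (hzN : z ≤ N)
    (hz : (N : ℝ) / 4 < z ^ 2) :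
    ∃ k < Nat.log 2 N + 3, (N : ℝ) / 2 ^ k ≤ z ∧ z ≤ 2 * (N / 2 ^ k) := by
  have hNR : (0 : ℝ) < N := by exact_mod_cast hN
  have hex : ∃ k : ℕ, (N : ℝ) ≤ z * 2 ^ k := by
    obtain ⟨k, hk⟩ := pow_unbounded_of_one_lt (N / z) (by norm_num : (1 : ℝ) < 2)
    refine ⟨k, ?_⟩
    rw [div_lt_iff₀ hz0] at hk
    linarith
  classical
  set k := Nat.find hex with hk
  have hspec : (N : ℝ) ≤ z * 2 ^ k := Nat.find_spec hex
  have hle : (N : ℝ) / 2 ^ k ≤ z := by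
    rw [div_le_iff₀ (by positivity)]
    exact hspec
  rcases Nat.eq_zero_or_pos k with h0 | hpos
  · refine ⟨k, by omega, hle, ?_⟩
    rw [h0]
    simp only [pow_zero, div_one]
    linarith
  · obtain ⟨l, hl⟩ : ∃ l, k = l + 1 := ⟨k - 1, by omega⟩
    have hmin : z * 2 ^ l < N := by
      have := Nat.find_min hex (m := l) (by omega)
      push Not at this
      exact this
    refine ⟨k, ?_, hle, ?_⟩
    · have h4 : (4 : ℝ) ^ l = (2 ^ l) ^ 2 := by rw [← pow_mul, mul_comm, pow_mul]; norm_num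
      have h1 : (z * 2 ^ l) ^ 2 < (N : ℝ) ^ 2 :=
        pow_lt_pow_left₀ hmin (by positivity) (by norm_num)
      have h2 : (4 : ℝ) ^ l < 4 * N := by
        rw [mul_pow, ← h4] at h1
        have h5 : (N : ℝ) / 4 * 4 ^ l < N * N := by
          have : (0 : ℝ) < 4 ^ l := by positivity
          nlinarith
        have h6 : (N : ℝ) * 4 ^ l < N * (4 * N) := by linarith
        exact lt_of_mul_lt_mul_left h6 hNR.le
      rcases Nat.lt_or_ge l 2 with hl2 | hl2
      · omega
      · obtain ⟨j, rfl⟩ : ∃ j, l = j + 1 := ⟨l - 1, by omega⟩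
        have h7 : 4 ^ j < N := by
          have : (4 : ℝ) ^ j < N := by
            rw [pow_succ] at h2
            linarith
          exact_mod_cast this
        have h8 : 2 ^ j ≤ N := (Nat.pow_le_pow_left (by norm_num) j).trans h7.le
        have := Nat.le_log_of_pow_le (by norm_num) h8
        omega
    · rw [hl, pow_succ, ← mul_div_assoc, le_div_iff₀ (by positivity)]
      linarith

/-- Small additive energy forces some dyadic level set of the exponential sum to be large. -/
lemma exists_level (A : Finset ℤ) (hA : A.Nonempty) (r : ℕ) {T : ℝ} (hT : 0 < T)
    (hE : (addEnergy A : ℝ) ≤ T ^ 2 * (A.card / 4)) :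
    ∃ k < Nat.log 2 A.card + 3, (A.card : ℝ) / 2 ^ k ≤ T ∧
      (A.card : ℝ) ≤ 16 * 2 ^ r * (Nat.log 2 A.card + 3) *
        ((A.card / 2 ^ k) ^ 2 * ∫ x in (0 : ℝ)..1, levelFun A k r x) := by
  set N := A.card with hN
  have hNpos : 0 < N := hA.card_pos
  have hNR : (0 : ℝ) < N := by exact_mod_cast hNpos
  set K := Nat.log 2 N + 3 with hK
  set I := (Finset.range K).filter fun k => (N : ℝ) / 2 ^ k ≤ T with hI
  have hterm : ∀ (k : ℕ) (x : ℝ), 0 ≤ 4 * 2 ^ r * (((N : ℝ) / 2 ^ k) ^ 2 * levelFun A k r x) :=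
    fun k x => by
      have := levelFun_nonneg A k r x
      positivity
  have hpt : ∀ x : ℝ, ‖expSum A x‖ ^ 2 ≤ N / 4 + ‖expSum A x‖ ^ 4 / T ^ 2 +
      ∑ k ∈ I, 4 * 2 ^ r * (((N : ℝ) / 2 ^ k) ^ 2 * levelFun A k r x) := by
    intro x
    have hsum0 : 0 ≤ ∑ k ∈ I, 4 * 2 ^ r * (((N : ℝ) / 2 ^ k) ^ 2 * levelFun A k r x) :=
      Finset.sum_nonneg fun k _ => hterm k x
    set z := ‖expSum A x‖ with hz
    have hz0 : 0 ≤ z := norm_nonneg _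
    have hfour : 0 ≤ z ^ 4 / T ^ 2 := by positivity
    by_cases h1 : z ^ 2 ≤ N / 4
    · linarith
    push Not at h1
    by_cases h2 : T ≤ z
    · have : z ^ 2 ≤ z ^ 4 / T ^ 2 := by
        rw [le_div_iff₀ (by positivity)]
        have := pow_le_pow_left₀ hT.le h2 2
        nlinarith [sq_nonneg z]
      linarith
    push Not at h2
    have hzpos : 0 < z := by
      rcases hz0.eq_or_lt with h | h
      · rw [← h] at h1
        norm_num at h1
        linarith
      · exact h
    obtain ⟨k, hkK, hk1, hk2⟩ := exists_dyadic_level hNpos hzpos (norm_expSum_le A x) h1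
    have hkI : k ∈ I := by
      rw [hI, Finset.mem_filter, Finset.mem_range]
      exact ⟨hkK, hk1.trans h2.le⟩
    have hf := le_levelFun A hA k r (x := x) hk1
    have hsingle := Finset.single_le_sum (fun k _ => hterm k x) hkI
    have hz2 : z ^ 2 ≤ 4 * 2 ^ r * (((N : ℝ) / 2 ^ k) ^ 2 * levelFun A k r x) := by
      calc z ^ 2 ≤ (2 * ((N : ℝ) / 2 ^ k)) ^ 2 := pow_le_pow_left₀ hz0 hk2 2
        _ = 4 * 2 ^ r * (((N : ℝ) / 2 ^ k) ^ 2 * (1 / 2) ^ r) := by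
            rw [one_div, inv_pow]
            field_simp
            norm_num
        _ ≤ _ := by gcongr
    linarith
  have hintegral := intervalIntegral.integral_mono_on (μ := volume) (a := (0 : ℝ)) (b := 1)
    zero_le_one
    (by apply Continuous.intervalIntegrable; fun_prop)
    (by apply Continuous.intervalIntegrable; fun_prop) (fun x _ => hpt x)
  rw [intervalIntegral.integral_add (by apply Continuous.intervalIntegrable; fun_prop)
      (by apply Continuous.intervalIntegrable; fun_prop),
    intervalIntegral.integral_add (by apply Continuous.intervalIntegrable; fun_prop)
      (by apply Continuous.intervalIntegrable; fun_prop),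
    intervalIntegral.integral_finsetSum
      (fun i _ => by apply Continuous.intervalIntegrable; fun_prop),
    integral_norm_expSum_sq] at hintegral
  simp_rw [intervalIntegral.integral_div, integral_norm_expSum_pow_four] at hintegral
  simp_rw [intervalIntegral.integral_const_mul] at hintegral
  have hE' : (addEnergy A : ℝ) / T ^ 2 ≤ N / 4 := by
    rw [div_le_iff₀ (by positivity)]
    linarith
  by_contra hcon
  push Not at hcon
  have hKR : (0 : ℝ) < K := by positivity
  have hKc : (K : ℝ) = Nat.log 2 N + 3 := by rw [hK]; push_cast; ring
  have hsmall : ∀ k ∈ I, 4 * 2 ^ r * (((N : ℝ) / 2 ^ k) ^ 2 *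
      ∫ x in (0 : ℝ)..1, levelFun A k r x) ≤ N / (4 * K) := by
    intro k hk
    rw [hI, Finset.mem_filter, Finset.mem_range] at hk
    have h := hcon k hk.1 hk.2
    rw [← hKc] at h
    rw [le_div_iff₀ (by positivity)]
    linarith
  have hbound := Finset.sum_le_card_nsmul I _ _ hsmall
  have hIcard : (I.card : ℝ) ≤ K := by
    exact_mod_cast (Finset.card_filter_le _ _).trans (by simp)
  rw [nsmul_eq_mul] at hbound
  have h9 : (I.card : ℝ) * (N / (4 * K)) ≤ N / 4 := by
    calc (I.card : ℝ) * (N / (4 * K)) ≤ K * (N / (4 * K)) := by gcongr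
      _ = N / 4 := by field_simp
  simp only [intervalIntegral.integral_const, sub_zero, one_smul] at hintegral
  linarith

lemma le_four_mul_log_mul_primeCounting {n : ℕ} (hn : 5 ≤ n) :
    (n : ℝ) ≤ 4 * Real.log n * n.primeCounting := by
  have hnR : (5 : ℝ) ≤ n := by exact_mod_cast hn
  have hlog : 0 < Real.log n := Real.log_pos (by linarith)
  have h := Chebyshev.pi_ge n
  rw [div_le_iff₀ hlog] at h
  have h8 : Real.log ((n : ℝ) + 1) ≤ (n + 1) / 8 - 1 + 3 * Real.log 2 := by
    have h1 : Real.log ((n : ℝ) + 1) = Real.log ((n + 1) / 8) + Real.log 8 := by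
      rw [Real.log_div (by positivity) (by norm_num)]
      ring
    have h2 : Real.log 8 = 3 * Real.log 2 := by
      rw [show (8 : ℝ) = 2 ^ 3 by norm_num, Real.log_pow]
      norm_num
    rw [h1, h2]
    linarith [Real.log_le_sub_one_of_pos (x := ((n : ℝ) + 1) / 8) (by positivity)]
  nlinarith [Real.log_two_gt_d9, Real.log_two_lt_d9]

lemma eventually_mul_one_add_log_sq_le_rpow (M : ℝ) {δ : ℝ} (hδ : 0 < δ) :
    ∀ᶠ N : ℕ in atTop, M * (1 + Real.log N) ^ 2 ≤ (N : ℝ) ^ δ := by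
  have ho := (isLittleO_log_rpow_rpow_atTop (2 : ℝ) hδ).bound
    (show (0 : ℝ) < 1 / (4 * (|M| + 1)) by positivity)
  filter_upwards [tendsto_natCast_atTop_atTop.eventually ho,
    tendsto_natCast_atTop_atTop.eventually_ge_atTop (Real.exp 1)] with N h1 h2
  have hN0 : (0 : ℝ) < N := (Real.exp_pos 1).trans_le h2
  have hlog : 1 ≤ Real.log N := (Real.le_log_iff_exp_le hN0).mpr h2
  rw [Real.norm_of_nonneg (by positivity), Real.norm_of_nonneg (by positivity),
    Real.rpow_two, div_mul_eq_mul_div, one_mul, le_div_iff₀ (by positivity)] at h1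
  have h3 : (1 + Real.log N) ^ 2 ≤ 4 * Real.log N ^ 2 := by nlinarith
  calc M * (1 + Real.log N) ^ 2 ≤ (|M| + 1) * (4 * Real.log N ^ 2) := by
        gcongr
        linarith [le_abs_self M]
    _ ≤ (N : ℝ) ^ δ := by linarith

lemma natLog_two_le_two_mul_log {n : ℕ} : (Nat.log 2 n : ℝ) ≤ 2 * Real.log n := by
  rcases Nat.eq_zero_or_pos n with rfl | hn
  · simp
  have h1 : (2 : ℝ) ^ Nat.log 2 n ≤ n := by exact_mod_cast Nat.pow_log_le_self 2 hn.ne'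
  have h2 := Real.log_le_log (by positivity) h1
  rw [Real.log_pow] at h2
  have h3 : (0 : ℝ) ≤ Nat.log 2 n := by positivity
  nlinarith [Real.log_two_gt_d9]

/-- If `A` has small additive energy and moderately large elements, then for most `x` some dilate
`p * x` makes the exponential sum over `A` large compared to `p`. -/
lemma volume_expSum_dilates_lt_le (A : Finset ℤ) (hA : A.Nonempty) {B : ℕ}
    (hAB : ∀ n ∈ A, 0 ≤ n ∧ n ≤ B) (r : ℕ) {C' κ δ : ℝ} (hC' : 0 < C') (hκ : κ ∈ Set.Icc (2 : ℝ) 3)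
    (hδ0 : 0 < δ) (hδ1 : δ ≤ 1) (hr : 2 ≤ δ * r)
    (hE : (addEnergy A : ℝ) ≤ C' * (A.card : ℝ) ^ κ)
    (hcard : 2 ≤ A.card)
    (hK : 32 * 2 ^ r * √C' * (Nat.log 2 A.card + 3) ≤ (A.card : ℝ) ^ δ)
    (hfive : 5 ≤ (A.card : ℝ) ^ δ)
    (hlog : 24 * Real.log A.card ≤ (A.card : ℝ) ^ δ)
    (hfreq : 2 * (8 * Real.log A.card + Real.log (16 * (r * B))) ≤ (A.card : ℝ) ^ δ) :
    volume {x ∈ Set.Ioc (0 : ℝ) 1 | ∀ p : ℕ, p ≠ 0 →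
      ‖expSum A (p * x)‖ < p * (A.card : ℝ) ^ ((3 - κ) / 2 - 5 * δ) / 2} ≤
      ENNReal.ofReal (4 * (A.card : ℝ) ^ (-δ)) := by
  set X : ℝ := (A.card : ℝ) with hX
  have hX2 : (2 : ℝ) ≤ X := by rw [hX]; exact_mod_cast hcard
  have hX0 : (0 : ℝ) < X := by linarith
  have hX1 : (1 : ℝ) ≤ X := by linarith
  have hlogX : 0 < Real.log X := Real.log_pos (by linarith)
  -- the threshold beyond which the fourth moment controls the second moment
  set T : ℝ := 2 * √C' * X ^ ((κ - 1) / 2) with hT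
  have hTpos : 0 < T := by
    have := Real.sqrt_pos.mpr hC'
    positivity
  have hT2 : T ^ 2 * (X / 4) = C' * X ^ κ := by
    have h1 : (X ^ ((κ - 1) / 2)) ^ 2 * X = X ^ κ := by
      rw [← Real.rpow_natCast, ← Real.rpow_mul hX0.le]
      nth_rewrite 2 [← Real.rpow_one X]
      rw [← Real.rpow_add hX0]
      congr 1
      push_cast
      ring
    rw [hT, mul_pow, mul_pow, Real.sq_sqrt hC'.le, ← h1]
    ring
  obtain ⟨k, hkK, hkT, hlevel⟩ := exists_level A hA r hTpos (hE.trans hT2.ge)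
  rw [← hX] at hkT hlevel
  set t : ℝ := X / 2 ^ k with ht
  set m : ℝ := ∫ x in (0 : ℝ)..1, levelFun A k r x with hm
  have htpos : 0 < t := by positivity
  have htX : t ≤ X := div_le_self hX0.le (one_le_pow₀ (by norm_num))
  have hm0 : 0 ≤ m :=
    intervalIntegral.integral_nonneg zero_le_one fun x _ => levelFun_nonneg A k r x
  have htm : X ^ ((3 - κ) / 2 - δ) ≤ t * m := by
    have h1 : X ≤ X ^ δ * X ^ ((κ - 1) / 2) * (t * m) := by
      calc X ≤ 16 * 2 ^ r * (Nat.log 2 A.card + 3) * (t ^ 2 * m) := hlevel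
        _ = 16 * 2 ^ r * (Nat.log 2 A.card + 3) * t * (t * m) := by ring
        _ ≤ 16 * 2 ^ r * (Nat.log 2 A.card + 3) * T * (t * m) := by gcongr
        _ = 32 * 2 ^ r * √C' * (Nat.log 2 A.card + 3) * X ^ ((κ - 1) / 2) * (t * m) := by
            rw [hT]; ring
        _ ≤ X ^ δ * X ^ ((κ - 1) / 2) * (t * m) := by gcongr
    have h2 : X ^ ((3 - κ) / 2 - δ) * (X ^ δ * X ^ ((κ - 1) / 2)) = X := by
      rw [← Real.rpow_add hX0, ← Real.rpow_add hX0]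
      nth_rewrite 2 [← Real.rpow_one X]
      congr 1
      ring
    have h3 : 0 < X ^ δ * X ^ ((κ - 1) / 2) := by positivity
    refine le_of_mul_le_mul_right ?_ h3
    linarith
  have hmlow : X ^ (-2 : ℝ) ≤ m := by
    have h1 : X ^ (-1 : ℝ) ≤ t * m :=
      (Real.rpow_le_rpow_of_exponent_le hX1 (by linarith [hκ.2])).trans htm
    have h2 : t * m ≤ X * m := by gcongr
    have h3 : X * X ^ (-2 : ℝ) = X ^ (-1 : ℝ) := by
      nth_rewrite 1 [← Real.rpow_one X]
      rw [← Real.rpow_add hX0]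
      norm_num
    refine le_of_mul_le_mul_left ?_ hX0
    linarith
  have hmpos : 0 < m := (Real.rpow_pos_of_pos hX0 _).trans_le hmlow
  have hm1 : m ≤ 1 := by
    have := intervalIntegral.integral_mono_on (μ := volume) (a := (0 : ℝ)) (b := 1) zero_le_one
      ((continuous_levelFun A k r).intervalIntegrable 0 1)
      (continuous_const.intervalIntegrable 0 1) fun x _ => levelFun_le_one A k r x
    simpa using this
  -- the range of the prime dilations
  set H : ℕ := ⌈X ^ (3 * δ) / m⌉₊ with hH
  have hHlow : X ^ (3 * δ) / m ≤ H := Nat.le_ceil _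
  have hδ3 : X ^ δ ≤ X ^ (3 * δ) := Real.rpow_le_rpow_of_exponent_le hX1 (by linarith)
  have hdiv : X ^ (3 * δ) ≤ X ^ (3 * δ) / m := le_div_self (by positivity) hmpos hm1
  have hH5 : 5 ≤ H := by
    have : (5 : ℝ) ≤ H := by linarith
    exact_mod_cast this
  have hHup : (H : ℝ) ≤ 2 * (X ^ (3 * δ) / m) := by
    have := Nat.ceil_lt_add_one (show 0 ≤ X ^ (3 * δ) / m by positivity)
    linarith
  have hH6 : (H : ℝ) ≤ X ^ (6 : ℕ) := by
    have h1 : X ^ (3 * δ) ≤ X ^ (3 : ℕ) := by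
      rw [← Real.rpow_natCast]
      exact Real.rpow_le_rpow_of_exponent_le hX1 (by push_cast; linarith)
    have h2 : 1 / m ≤ X ^ 2 := by
      rw [div_le_iff₀ hmpos]
      have h3 : X ^ 2 * X ^ (-2 : ℝ) = 1 := by
        rw [← Real.rpow_natCast, ← Real.rpow_add hX0]
        norm_num
      have h4 : X ^ 2 * X ^ (-2 : ℝ) ≤ X ^ 2 * m := by gcongr
      linarith
    calc (H : ℝ) ≤ 2 * (X ^ (3 * δ) * (1 / m)) := by
          rw [mul_one_div]; exact hHup
      _ ≤ X * (X ^ 3 * X ^ 2) := by gcongr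
      _ = X ^ 6 := by ring
  have hHpos : (0 : ℝ) < H := by exact_mod_cast (by omega : 0 < H)
  set P : Finset ℕ := Nat.primesLE H with hP
  have hPprime : ∀ p ∈ P, p.Prime := fun p hp => (Nat.mem_primesLE.mp hp).2
  have hPle : ∀ p ∈ P, p ≤ H := fun p hp => (Nat.mem_primesLE.mp hp).1
  have hPcard : (P.card : ℝ) = Nat.primeCounting H := by
    rw [hP, Nat.primesLE_card_eq_primeCounting]
  have hPm : X ^ (2 * δ) ≤ P.card * m := by
    have h1 := le_four_mul_log_mul_primeCounting hH5
    have h2 : Real.log H ≤ 6 * Real.log X := by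
      have := Real.log_le_log hHpos hH6
      rwa [Real.log_pow] at this
    have h3 : X ^ (3 * δ) ≤ X ^ δ * (P.card * m) := by
      calc X ^ (3 * δ) = X ^ (3 * δ) / m * m := by field_simp
        _ ≤ H * m := by gcongr
        _ ≤ 4 * Real.log H * P.card * m := by rw [hPcard]; gcongr
        _ ≤ 4 * (6 * Real.log X) * P.card * m := by gcongr
        _ = 24 * Real.log X * (P.card * m) := by ring
        _ ≤ X ^ δ * (P.card * m) := by gcongr
    have h4 : X ^ (3 * δ) = X ^ δ * X ^ (2 * δ) := by
      rw [← Real.rpow_add hX0]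
      congr 1
      ring
    rw [h4] at h3
    exact le_of_mul_le_mul_left h3 (by positivity)
  have hPne : P.Nonempty := ⟨2, Nat.mem_primesLE.mpr ⟨by omega, Nat.prime_two⟩⟩
  have hL : (Nat.log 2 (H * (r * (4 ^ k * B))) : ℝ) ≤ X ^ δ := by
    rcases Nat.eq_zero_or_pos (H * (r * (4 ^ k * B))) with h0 | hpos
    · rw [h0]
      simp only [Nat.log_zero_right, Nat.cast_zero]
      positivity
    refine natLog_two_le_two_mul_log.trans (le_trans ?_ hfreq)
    have hrB : (0 : ℝ) < r * B := by
      have : 0 < r * B := by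
        rcases Nat.eq_zero_or_pos (r * B) with h | h
        · rw [show H * (r * (4 ^ k * B)) = H * 4 ^ k * (r * B) by ring, h] at hpos
          simp at hpos
        · exact h
      exact_mod_cast this
    have h4k : (4 : ℝ) ^ k ≤ 16 * X ^ 2 := by
      have h1 : (2 : ℝ) ^ k ≤ 4 * X := by
        calc (2 : ℝ) ^ k ≤ 2 ^ (Nat.log 2 A.card + 2) :=
              pow_le_pow_right₀ (by norm_num) (by omega)
          _ = 4 * ((2 ^ Nat.log 2 A.card : ℕ) : ℝ) := by push_cast; ring
          _ ≤ 4 * X := by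
              have := Nat.pow_log_le_self 2 (show A.card ≠ 0 by omega)
              rw [hX]
              gcongr
      have h4 : (4 : ℝ) ^ k = (2 ^ k) ^ 2 := by rw [← pow_mul, mul_comm, pow_mul]; norm_num
      rw [h4]
      calc ((2 : ℝ) ^ k) ^ 2 ≤ (4 * X) ^ 2 := by gcongr
        _ = 16 * X ^ 2 := by ring
    have hle : ((H * (r * (4 ^ k * B)) : ℕ) : ℝ) ≤ X ^ 8 * (16 * (r * B)) := by
      push_cast
      calc (H : ℝ) * (r * (4 ^ k * B)) = H * 4 ^ k * (r * B) := by ring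
        _ ≤ X ^ 6 * (16 * X ^ 2) * (r * B) := by gcongr
        _ = X ^ 8 * (16 * (r * B)) := by ring
    have := Real.log_le_log (by exact_mod_cast hpos) hle
    rw [Real.log_mul (by positivity) (by positivity), Real.log_pow] at this
    push_cast at this ⊢
    linarith
  have hvol := volume_forall_dilate_le (continuous_levelFun A k r)
    (levelFun_mem_trigSpan A k r B hAB) (levelFun_nonneg A k r) (levelFun_le_one A k r) hmpos P
    hPprime hPle hPne
  refine (measure_mono ?_).trans (hvol.trans (ENNReal.ofReal_le_ofReal ?_))
  · rintro x ⟨hx, hsmall⟩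
    refine ⟨hx, fun p hp => ?_⟩
    have hp0 : p ≠ 0 := (hPprime p hp).ne_zero
    have hS := hsmall p hp0
    have hpH : (p : ℝ) ≤ H := by exact_mod_cast hPle p hp
    have hSt : ‖expSum A (p * x)‖ ≤ t * X ^ (-δ) := by
      have h1 : X ^ ((3 - κ) / 2 - 5 * δ) ≤ t * m * X ^ (-(4 * δ)) := by
        have : X ^ ((3 - κ) / 2 - 5 * δ) = X ^ ((3 - κ) / 2 - δ) * X ^ (-(4 * δ)) := by
          rw [← Real.rpow_add hX0]
          congr 1
          ring
        rw [this]
        gcongr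
      calc ‖expSum A (p * x)‖ ≤ p * X ^ ((3 - κ) / 2 - 5 * δ) / 2 := hS.le
        _ ≤ 2 * (X ^ (3 * δ) / m) * (t * m * X ^ (-(4 * δ))) / 2 := by
            gcongr
            exact hpH.trans hHup
        _ = t * (X ^ (3 * δ) * X ^ (-(4 * δ))) := by field_simp
        _ = t * X ^ (-δ) := by
            rw [← Real.rpow_add hX0]
            congr 2
            ring
    refine (levelFun_le A k r _).trans ?_
    rw [← hX, ← ht]
    have hq : ‖expSum A (p * x)‖ ^ 2 / t ^ 2 ≤ X ^ (-(2 * δ)) := by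
      rw [div_le_iff₀ (by positivity)]
      calc ‖expSum A (p * x)‖ ^ 2 ≤ (t * X ^ (-δ)) ^ 2 := by gcongr
        _ = X ^ (-(2 * δ)) * t ^ 2 := by
            rw [mul_pow, ← Real.rpow_natCast (X ^ (-δ)), ← Real.rpow_mul hX0.le, mul_comm]
            congr 2
            push_cast
            ring
    calc (‖expSum A (p * x)‖ ^ 2 / t ^ 2) ^ r ≤ (X ^ (-(2 * δ))) ^ r := by gcongr
      _ = X ^ (-(2 * δ) * r) := by rw [← Real.rpow_natCast, ← Real.rpow_mul hX0.le]
      _ ≤ X ^ (-2 - 1 : ℝ) := Real.rpow_le_rpow_of_exponent_le hX1 (by linarith)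
      _ = X ^ (-2 : ℝ) / X := by rw [Real.rpow_sub hX0, Real.rpow_one]
      _ ≤ m / 2 := by gcongr
  · rw [div_le_iff₀ (by positivity)]
    calc 4 * (Nat.log 2 (H * (r * (4 ^ k * B))) : ℝ) ≤ 4 * X ^ δ := by gcongr
      _ = 4 * X ^ (-δ) * X ^ (2 * δ) := by
          rw [mul_assoc, ← Real.rpow_add hX0]
          congr 2
          ring
      _ ≤ 4 * X ^ (-δ) * (P.card * m) := by gcongr

lemma strictMonoOn_Ici_of_forall_lt_succ {a : ℕ → ℕ} (ha : ∀ n : ℕ, 1 ≤ n → a n < a (n + 1)) :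
    StrictMonoOn a (Set.Ici 1) := by
  intro m hm n _ hmn
  induction n, hmn using Nat.le_induction with
  | base => exact ha m hm
  | succ k hk ih =>
    have hm1 : 1 ≤ m := hm
    have hmk : m + 1 ≤ k := hk
    exact (ih (Set.mem_Ici.mpr (by omega))).trans (ha k (by omega))

lemma norm_expSum_dilate_le_starDisc {a : ℕ → ℕ} (ha : StrictMonoOn a (Set.Ici 1)) (N : ℕ) {p : ℕ}
    (hp : p ≠ 0) (x : ℝ) :
    ‖expSum ((Finset.Icc 1 N).image fun n => (a n : ℤ)) (p * x)‖ ≤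
      2 * Real.pi * p * (N * starDisc N fun n => Int.fract ((a n : ℝ) * x)) := by
  have hsum : expSum ((Finset.Icc 1 N).image fun n => (a n : ℤ)) (p * x) =
      ∑ n ∈ Finset.Icc 1 N, trigChar p (Int.fract ((a n : ℝ) * x)) := by
    rw [expSum, Finset.sum_image]
    · refine Finset.sum_congr rfl fun n _ => ?_
      rw [trigChar_mul_fract, trigChar_natCast_mul, trigChar_natCast_mul, mul_comm]
    · intro m hm n hn hmn
      simp only [Finset.coe_Icc, Set.mem_Icc, Nat.cast_inj] at hm hn hmn
      exact ha.injOn hm.1 hn.1 hmn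
  rw [hsum]
  exact norm_sum_trigChar_le_starDisc N hp _ fun n => ⟨Int.fract_nonneg _, Int.fract_lt_one _⟩

/-- The set of `α` for which the discrepancy of `({a_n α})` is small has measure tending to `0`. -/
lemma eventually_volume_starDisc_lt_le {a : ℕ → ℕ} (ha : StrictMonoOn a (Set.Ici 1))
    (ha_pos : ∀ n : ℕ, 1 ≤ n → 0 < a n) {γ C : ℝ} (hγ : 0 < γ) (hC : 0 < C)
    (hgrowth : ∀ n : ℕ, 1 ≤ n → (a n : ℝ) ≤ C * Real.exp (γ * (Real.log n) ^ 2))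
    {κ : ℝ} (hκ : κ ∈ Set.Icc (2 : ℝ) 3) {C' : ℝ} (hC' : 0 < C')
    (henergy : ∀ N : ℕ, 1 ≤ N →
      (addEnergy ((Finset.Icc 1 N).image fun n => (a n : ℤ)) : ℝ) ≤ C' * (N : ℝ) ^ κ)
    {ε η : ℝ} (hε : 0 < ε) (hη : 0 < η) :
    ∀ᶠ N : ℕ in atTop, volume {x ∈ Set.Ioc (0 : ℝ) 1 |
      (N : ℝ) * starDisc N (fun n => Int.fract ((a n : ℝ) * x)) < (N : ℝ) ^ ((3 - κ) / 2 - ε)} ≤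
      ENNReal.ofReal η := by
  set δ : ℝ := min (ε / 6) 1 with hδ
  have hδ0 : 0 < δ := by positivity
  have hδ1 : δ ≤ 1 := min_le_right _ _
  have hδε : 6 * δ ≤ ε := by linarith [min_le_left (ε / 6) 1]
  obtain ⟨r, hr⟩ := exists_nat_ge (2 / δ)
  rw [div_le_iff₀ hδ0, mul_comm] at hr
  have hrpos : (0 : ℝ) < r := by
    by_contra hcon
    nlinarith
  set c : ℝ := |Real.log (16 * (r * C))| with hc
  have hc0 : 0 ≤ c := abs_nonneg _
  have hs0 : 0 ≤ 2 ^ r * √C' := by positivity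
  filter_upwards [eventually_mul_one_add_log_sq_le_rpow
    (96 * (2 ^ r * √C') + 24 + 2 * (8 + c + γ) + 4 / η) hδ0, eventually_ge_atTop 2] with N hM hN2
  set A := (Finset.Icc 1 N).image fun n => (a n : ℤ) with hA
  have hcard : A.card = N := by
    rw [hA, Finset.card_image_of_injOn, Nat.card_Icc, Nat.add_sub_cancel]
    intro m hm n hn hmn
    simp only [Finset.coe_Icc, Set.mem_Icc, Nat.cast_inj] at hm hn hmn
    exact ha.injOn hm.1 hn.1 hmn
  have hN0 : (0 : ℝ) < N := by exact_mod_cast (by omega : 0 < N)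
  have hN1 : (1 : ℝ) ≤ N := by exact_mod_cast (by omega : 1 ≤ N)
  have hlog : 0 ≤ Real.log N := Real.log_nonneg hN1
  have hη4 : 0 < 4 / η := by positivity
  set l := (1 + Real.log N) ^ 2 with hl
  have hl1 : 1 ≤ l := by nlinarith
  have hllog : Real.log N ≤ l := by nlinarith
  have hllog2 : Real.log N ^ 2 ≤ l := by nlinarith
  have hpow : 0 < (N : ℝ) ^ δ := by positivity
  have hsl : 0 ≤ 2 ^ r * √C' * l := by positivity
  have hcl : 0 ≤ c * l := by positivity
  have hγl : 0 ≤ γ * l := by positivity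
  have hηl : 0 ≤ 4 / η * l := by positivity
  have hmain := volume_expSum_dilates_lt_le A (Finset.card_pos.mp (by omega)) (B := a N) ?_ r hC' hκ
    hδ0 hδ1 hr (by rw [hcard]; exact henergy N (by omega)) (by omega)
    (by
      rw [hcard]
      have h1 : (Nat.log 2 N : ℝ) + 3 ≤ 3 * l := by
        have := natLog_two_le_two_mul_log (n := N)
        nlinarith
      have h2 := mul_le_mul_of_nonneg_left h1 hs0
      linarith)
    (by rw [hcard]; linarith) (by rw [hcard]; linarith)
    (by
      rw [hcard]
      have haN : (0 : ℝ) < a N := by exact_mod_cast ha_pos N (by omega)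
      have h1 : Real.log (16 * (r * a N)) ≤ c + γ * Real.log N ^ 2 := by
        calc Real.log (16 * (r * a N))
            ≤ Real.log (16 * (r * C) * Real.exp (γ * Real.log N ^ 2)) := by
              refine Real.log_le_log (by positivity) ?_
              have := hgrowth N (by omega)
              calc (16 : ℝ) * (r * a N) ≤ 16 * (r * (C * Real.exp (γ * Real.log N ^ 2))) := by
                    gcongr
                _ = _ := by ring
          _ = Real.log (16 * (r * C)) + γ * Real.log N ^ 2 := by
              rw [Real.log_mul (by positivity) (by positivity), Real.log_exp]
          _ ≤ c + γ * Real.log N ^ 2 := by linarith [le_abs_self (Real.log (16 * (r * C)))]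
      have h2 := mul_le_mul_of_nonneg_left hllog2 hγ.le
      have h3 := mul_le_mul_of_nonneg_left hl1 hc0
      linarith)
  · rw [hcard] at hmain
    refine (measure_mono ?_).trans (hmain.trans (ENNReal.ofReal_le_ofReal ?_))
    · rintro x ⟨hx, hsmall⟩
      refine ⟨hx, fun p hp => ?_⟩
      have hp0 : (0 : ℝ) < p := by exact_mod_cast Nat.pos_of_ne_zero hp
      have hpi : 4 * Real.pi ≤ (N : ℝ) ^ δ := by linarith [Real.pi_le_four]
      calc ‖expSum A (p * x)‖
          ≤ 2 * Real.pi * p * (N * starDisc N fun n => Int.fract ((a n : ℝ) * x)) :=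
            norm_expSum_dilate_le_starDisc ha N hp x
        _ < 2 * Real.pi * p * (N : ℝ) ^ ((3 - κ) / 2 - ε) := by
            have := Real.pi_pos
            gcongr
        _ ≤ 2 * Real.pi * p * (N : ℝ) ^ ((3 - κ) / 2 - 6 * δ) := by
            have := Real.pi_pos
            gcongr
        _ = p * (4 * Real.pi * (N : ℝ) ^ ((3 - κ) / 2 - 6 * δ)) / 2 := by ring
        _ ≤ p * ((N : ℝ) ^ δ * (N : ℝ) ^ ((3 - κ) / 2 - 6 * δ)) / 2 := by gcongr
        _ = p * (N : ℝ) ^ ((3 - κ) / 2 - 5 * δ) / 2 := by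
            rw [← Real.rpow_add hN0]
            congr 3
            ring
    · rw [Real.rpow_neg hN0.le, ← div_eq_mul_inv, div_le_iff₀ hpow]
      have h1 : 4 / η ≤ (N : ℝ) ^ δ := by nlinarith
      rw [div_le_iff₀ hη] at h1
      linarith
  · intro n hn
    rw [hA, Finset.mem_image] at hn
    obtain ⟨i, hi, rfl⟩ := hn
    rw [Finset.mem_Icc] at hi
    refine ⟨by positivity, ?_⟩
    have hmono : a i ≤ a N :=
      ha.monotoneOn (Set.mem_Ici.mpr hi.1) (Set.mem_Ici.mpr (hi.1.trans hi.2)) hi.2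
    exact_mod_cast hmono

/-- If the measures of the sets `s n` tend to `0`, then almost no point lies in all but finitely
many of them. -/
lemma measure_eventually_mem_eq_zero {X : Type*} [MeasurableSpace X] {μ : Measure X} {s : ℕ → Set X}
    (hs : ∀ η : ℝ, 0 < η → ∀ᶠ n in atTop, μ (s n) ≤ ENNReal.ofReal η) :
    μ {x | ∀ᶠ n in atTop, x ∈ s n} = 0 := by
  have hunion : {x | ∀ᶠ n in atTop, x ∈ s n} = ⋃ m : ℕ, {x | ∀ n ≥ m, x ∈ s n} := by
    ext x
    simp [eventually_atTop]
  rw [hunion, measure_iUnion_null_iff]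
  intro m
  refine le_antisymm (ENNReal.le_of_forall_pos_le_add fun η hη _ => ?_) (by positivity)
  obtain ⟨n, hn, hmn⟩ := ((hs η (by exact_mod_cast hη)).and (eventually_ge_atTop m)).exists
  rw [zero_add]
  refine (measure_mono (fun x (hx : ∀ n ≥ m, x ∈ s n) => hx n hmn)).trans (hn.trans ?_)
  simp

/-- A `1`-periodic property holds almost everywhere once it does on `(0, 1]`. -/
lemma ae_of_periodic {p : ℝ → Prop} (hp : ∀ (x : ℝ) (k : ℤ), p (x - k) → p x)
    (h : volume {x ∈ Set.Ioc (0 : ℝ) 1 | ¬ p x} = 0) : ∀ᵐ x ∂(volume : Measure ℝ), p x := by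
  have hsub : {x | ¬ p x} ⊆
      ⋃ k : ℤ, (fun x : ℝ => x - k) ⁻¹' {x ∈ Set.Ioc (0 : ℝ) 1 | ¬ p x} := by
    intro x hx
    refine Set.mem_iUnion.mpr ⟨⌈x⌉ - 1, ?_, fun hpx => hx (hp x _ hpx)⟩
    have h1 := Int.ceil_lt_add_one x
    have h2 := Int.le_ceil x
    push_cast
    constructor <;> linarith
  refine measure_mono_null hsub (measure_iUnion_null fun k => ?_)
  simp_rw [sub_eq_add_neg]
  rwa [measure_preimage_add_right]

theorem stmt0 (a : ℕ → ℕ)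
    (ha_incr : ∀ n : ℕ, 1 ≤ n → a n < a (n + 1))
    (ha_pos : ∀ n : ℕ, 1 ≤ n → 0 < a n)
    (γ C : ℝ) (hγ : 0 < γ) (hC : 0 < C)
    (hgrowth : ∀ n : ℕ, 1 ≤ n → (a n : ℝ) ≤ C * Real.exp (γ * (Real.log n) ^ 2))
    (κ : ℝ) (hκ : κ ∈ Set.Icc (2 : ℝ) 3) (C' : ℝ) (hC' : 0 < C')
    (henergy : ∀ N : ℕ, 1 ≤ N →
      (addEnergy ((Finset.Icc 1 N).image fun n => (a n : ℤ)) : ℝ) ≤ C' * (N : ℝ) ^ κ) :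
    ∀ᵐ α ∂(volume : Measure ℝ), ∀ ε > 0, ∃ᶠ N : ℕ in atTop,
      (N : ℝ) * starDisc N (fun n => Int.fract ((a n : ℝ) * α)) ≥
        (N : ℝ) ^ ((3 - κ) / 2 - ε) := by
  have ha := strictMonoOn_Ici_of_forall_lt_succ ha_incr
  have hfix : ∀ ε > 0, ∀ᵐ α ∂(volume : Measure ℝ), ∃ᶠ N : ℕ in atTop,
      (N : ℝ) * starDisc N (fun n => Int.fract ((a n : ℝ) * α)) ≥
        (N : ℝ) ^ ((3 - κ) / 2 - ε) := by
    intro ε hε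
    refine ae_of_periodic ?_ ?_
    · intro x k h
      have hper : ∀ n, Int.fract ((a n : ℝ) * (x - k)) = Int.fract ((a n : ℝ) * x) := by
        intro n
        rw [mul_sub, show (a n : ℝ) * k = ((a n * k : ℤ) : ℝ) by push_cast; ring,
          Int.fract_sub_intCast]
      simpa only [hper] using h
    · refine measure_mono_null ?_ (measure_eventually_mem_eq_zero fun η hη =>
        eventually_volume_starDisc_lt_le ha ha_pos hγ hC hgrowth hκ hC' henergy hε hη)
      rintro x ⟨hx, hfreq⟩
      rw [not_frequently] at hfreq
      exact hfreq.mono fun N hN => ⟨hx, not_le.mp hN⟩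
  have hall : ∀ᵐ α ∂(volume : Measure ℝ), ∀ m : ℕ, ∃ᶠ N : ℕ in atTop,
      (N : ℝ) * starDisc N (fun n => Int.fract ((a n : ℝ) * α)) ≥
        (N : ℝ) ^ ((3 - κ) / 2 - 1 / ((m : ℝ) + 1)) :=
    ae_all_iff.mpr fun m => hfix _ (by positivity)
  filter_upwards [hall] with α hα ε hε
  obtain ⟨m, hm⟩ := exists_nat_one_div_lt hε
  refine ((hα m).and_eventually (eventually_ge_atTop 1)).mono fun N hN => ?_
  exact le_trans (Real.rpow_le_rpow_of_exponent_le (by exact_mod_cast hN.2) (by linarith)) hN.1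
end

section
/- Let (a_n)_{n≥1} be a strictly increasing sequence of positive integers such that there exist constants γ > 0 and C > 0 with a_n ≤ C·e^{γ(log n)²} for all n ≥ 1, and assume that for every ε > 0 there is a constant C_ε with E({a_1, …, a_N}) ≤ C_ε·N^{2+ε} for all N ≥ 1. Then for Lebesgue-almost all real α, both of the following hold: (i) for every ε > 0 there exists C'_ε with N·D_N*({a_1 α}, …, {a_N α}) ≤ C'_ε·N^{1/2+ε} for all N; (ii) for every ε > 0 there are infinitely many N with N·D_N*({a_1 α}, …, {a_N α}) ≥ N^{1/2−ε}. -/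
open Filter MeasureTheory

section

open Finset hiding addEnergy
open Complex Real

/-- The additive character `x ↦ exp (2 π i x)`. -/
noncomputable def unitExp (x : ℝ) : ℂ := Complex.exp ((2 * π * x : ℝ) * I)

lemma unitExp_add (x y : ℝ) : unitExp (x + y) = unitExp x * unitExp y := by
  simp only [unitExp, ← Complex.exp_add]
  congr 1
  push_cast
  ring

lemma norm_unitExp (x : ℝ) : ‖unitExp x‖ = 1 := Complex.norm_exp_ofReal_mul_I _

lemma conj_unitExp (x : ℝ) : (starRingEnd ℂ) (unitExp x) = unitExp (-x) := by
  simp only [unitExp, ← Complex.exp_conj, map_mul, Complex.conj_ofReal, Complex.conj_I]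
  congr 1
  push_cast
  ring

lemma unitExp_re (x : ℝ) : (unitExp x).re = Real.cos (2 * π * x) :=
  Complex.exp_ofReal_mul_I_re _

lemma unitExp_intCast (k : ℤ) : unitExp k = 1 := by
  rw [unitExp, Complex.exp_eq_one_iff]
  exact ⟨k, by push_cast; ring⟩

lemma unitExp_mul_fract (h : ℕ) (x : ℝ) : unitExp (h * Int.fract x) = unitExp (h * x) := by
  have hx : (h : ℝ) * x = h * Int.fract x + ((h * ⌊x⌋ : ℤ) : ℝ) := by
    push_cast
    rw [← mul_add, Int.fract_add_floor]
  rw [hx, unitExp_add, unitExp_intCast, mul_one]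

lemma continuous_unitExp : Continuous unitExp := by
  unfold unitExp
  fun_prop

lemma hasDerivAt_unitExp (c x : ℝ) :
    HasDerivAt (fun t : ℝ => unitExp (c * t)) (2 * π * c * I * unitExp (c * x)) x := by
  have h : HasDerivAt (fun t : ℝ => ((2 * π * (c * t) : ℝ) : ℂ) * I) ((2 * π * c : ℝ) * I) x := by
    have h1 : HasDerivAt (fun t : ℝ => 2 * π * (c * t)) (2 * π * c) x := by
      simpa using ((hasDerivAt_id x).const_mul c).const_mul (2 * π)
    exact h1.ofReal_comp.mul_const I
  convert! h.cexp using 1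
  change _ = unitExp (c * x) * _
  push_cast
  ring

lemma integral_unitExp (k j : ℤ) :
    ∫ t in (j : ℝ)..(j + 1), unitExp (k * t) = if k = 0 then 1 else 0 := by
  split_ifs with hk
  · simp [hk, unitExp]
  · have hne : (2 * π * (k : ℝ) * I : ℂ) ≠ 0 := by
      simp [hk, Real.pi_ne_zero]
    have hd : ∀ t ∈ Set.uIcc (j : ℝ) (j + 1), HasDerivAt
        (fun t : ℝ => unitExp (k * t) / (2 * π * (k : ℝ) * I)) (unitExp (k * t)) t := by
      intro t _
      convert! (hasDerivAt_unitExp k t).div_const (2 * π * (k : ℝ) * I) using 1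
      rw [mul_div_cancel_left₀ _ hne]
    rw [intervalIntegral.integral_eq_sub_of_hasDerivAt hd
      ((continuous_unitExp.comp (by fun_prop)).intervalIntegrable _ _), sub_eq_zero]
    congr 1
    have h1 : (k : ℝ) * j = ((k * j : ℤ) : ℝ) := by push_cast; ring
    have h2 : (k : ℝ) * (j + 1) = ((k * (j + 1) : ℤ) : ℝ) := by push_cast; ring
    rw [h1, h2, unitExp_intCast, unitExp_intCast]

/-- Orthogonality of characters on an interval of unit length. -/
lemma integral_norm_sq_sum_unitExp {ι : Type*} (s : Finset ι) (c : ι → ℝ) (k : ι → ℤ) (j : ℤ) :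
    ∫ t in (j : ℝ)..(j + 1), ‖∑ i ∈ s, (c i : ℂ) * unitExp (k i * t)‖ ^ 2
      = ∑ i ∈ s, ∑ i' ∈ s, if k i = k i' then c i * c i' else 0 := by
  have hexp (t : ℝ) : ((‖∑ i ∈ s, (c i : ℂ) * unitExp (k i * t)‖ ^ 2 : ℝ) : ℂ)
      = ∑ i ∈ s, ∑ i' ∈ s, (c i * c i' : ℂ) * unitExp ((k i - k i' : ℤ) * t) := by
    rw [Complex.ofReal_pow, ← Complex.mul_conj', map_sum, sum_mul_sum]
    refine sum_congr rfl fun i _ => sum_congr rfl fun i' _ => ?_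
    have h : ((k i - k i' : ℤ) : ℝ) * t = k i * t + -(k i' * t) := by push_cast; ring
    rw [h, unitExp_add, map_mul, conj_unitExp, Complex.conj_ofReal]
    ring
  have hcont (c : ℂ) (k : ℤ) :
      IntervalIntegrable (fun t : ℝ => c * unitExp (k * t)) volume j (j + 1) :=
    (continuous_const.mul (continuous_unitExp.comp (by fun_prop))).intervalIntegrable _ _
  apply Complex.ofReal_injective
  rw [← intervalIntegral.integral_ofReal]
  simp_rw [hexp]
  rw [intervalIntegral.integral_finsetSum fun i _ => by
    simpa only [Finset.sum_fn] using IntervalIntegrable.sum s fun i' _ => hcont _ _]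
  simp only [Complex.ofReal_sum]
  refine sum_congr rfl fun i _ => ?_
  rw [intervalIntegral.integral_finsetSum fun i' _ => hcont _ _]
  refine sum_congr rfl fun i' _ => ?_
  rw [intervalIntegral.integral_const_mul, integral_unitExp]
  simp only [sub_eq_zero]
  split_ifs <;> simp

lemma lintegral_norm_sq_sum_unitExp {ι : Type*} (s : Finset ι) (c : ι → ℝ) (k : ι → ℤ) (j : ℤ) :
    ∫⁻ t in Set.Ioc (j : ℝ) (j + 1),
        ENNReal.ofReal (‖∑ i ∈ s, (c i : ℂ) * unitExp (k i * t)‖ ^ 2)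
      = ENNReal.ofReal (∑ i ∈ s, ∑ i' ∈ s, if k i = k i' then c i * c i' else 0) := by
  rw [← integral_norm_sq_sum_unitExp s c k j,
    intervalIntegral.integral_of_le (by linarith), ofReal_integral_eq_lintegral_ofReal]
  · refine (Continuous.integrableOn_Icc ?_).mono_set Set.Ioc_subset_Icc_self
    have := continuous_unitExp
    fun_prop
  · exact ae_of_all _ fun t => by positivity

lemma ae_summable_of_lintegral_le {ι Ω : Type*} [Countable ι] [MeasurableSpace Ω] {μ : Measure Ω}
    {f : ι → Ω → ℝ} {c : ι → ℝ} (hf : ∀ i, Measurable (f i)) (hf0 : ∀ i ω, 0 ≤ f i ω)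
    (hc0 : ∀ i, 0 ≤ c i) (hc : Summable c)
    (hle : ∀ i, ∫⁻ ω, ENNReal.ofReal (f i ω) ∂μ ≤ ENNReal.ofReal (c i)) :
    ∀ᵐ ω ∂μ, Summable fun i => f i ω := by
  have hfin : ∫⁻ ω, ∑' i, ENNReal.ofReal (f i ω) ∂μ ≠ ⊤ := by
    rw [lintegral_tsum fun i => (hf i).ennreal_ofReal.aemeasurable]
    refine ne_top_of_le_ne_top ?_ (ENNReal.tsum_le_tsum hle)
    rw [← ENNReal.ofReal_tsum_of_nonneg hc0 hc]
    exact ENNReal.ofReal_ne_top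
  filter_upwards [ae_lt_top (Measurable.tsum fun i => (hf i).ennreal_ofReal) hfin]
    with ω hω
  have := ENNReal.summable_toReal hω.ne
  exact this.congr fun i => ENNReal.toReal_ofReal (hf0 i ω)

lemma ae_volume_of_forall_Ioc {p : ℝ → Prop}
    (h : ∀ j : ℤ, ∀ᵐ t ∂(volume.restrict (Set.Ioc (j : ℝ) (j + 1))), p t) :
    ∀ᵐ t ∂(volume : Measure ℝ), p t := by
  have := (ae_restrict_iUnion_iff (μ := volume) (fun j : ℤ => Set.Ioc (j : ℝ) (j + 1)) p).2 h
  rwa [iUnion_Ioc_intCast, Measure.restrict_univ] at this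

lemma norm_sum_range_sq_le_dyadic (z : ℕ → ℂ) {K N : ℕ} (hN : N < 2 ^ K) :
    ‖∑ n ∈ range N, z n‖ ^ 2 ≤ K * ∑ i ∈ range K, ∑ j ∈ range (2 ^ (K - i)),
      ‖∑ n ∈ Ico (j * 2 ^ i) ((j + 1) * 2 ^ i), z n‖ ^ 2 := by
  set S : ℕ → ℂ := fun M => ∑ n ∈ range M, z n with hS
  set m : ℕ → ℕ := fun i => N / 2 ^ i * 2 ^ i with hm
  have htel : S N = ∑ i ∈ range K, (S (m i) - S (m (i + 1))) := by
    rw [sum_range_sub']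
    simp [hm, hS, Nat.div_eq_of_lt hN]
  have hblock : ∀ i ∈ range K, ‖S (m i) - S (m (i + 1))‖ ^ 2 ≤
      ∑ j ∈ range (2 ^ (K - i)), ‖∑ n ∈ Ico (j * 2 ^ i) ((j + 1) * 2 ^ i), z n‖ ^ 2 := by
    intro i hi
    have hiK : i < K := mem_range.1 hi
    have hdiv : N / 2 ^ (i + 1) = N / 2 ^ i / 2 := by rw [pow_succ, Nat.div_div_eq_div_mul]
    set q := N / 2 ^ i with hq
    have hqlt : q < 2 ^ (K - i) := by
      rw [hq, Nat.div_lt_iff_lt_mul (by positivity), ← pow_add, Nat.sub_add_cancel hiK.le]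
      exact hN
    have hm1 : m (i + 1) = q / 2 * 2 * 2 ^ i := by
      simp only [hm, hdiv]
      ring
    rcases Nat.even_or_odd' q with ⟨r, hr | hr⟩
    · have : m (i + 1) = m i := by
        rw [hm1, show q / 2 * 2 = q by omega]
      rw [this, sub_self, norm_zero, zero_pow two_ne_zero]
      positivity
    · have h1 : m (i + 1) = (q - 1) * 2 ^ i := by
        rw [hm1, show q / 2 * 2 = q - 1 by omega]
      have h2 : m i = (q - 1 + 1) * 2 ^ i := by
        rw [Nat.sub_add_cancel (by omega)]
      have h3 : S (m i) - S (m (i + 1)) =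
          ∑ n ∈ Ico ((q - 1) * 2 ^ i) ((q - 1 + 1) * 2 ^ i), z n := by
        rw [h1, h2, sum_Ico_eq_sub _ (Nat.mul_le_mul_right _ (Nat.le_succ _))]
      rw [h3]
      exact single_le_sum (f := fun j => ‖∑ n ∈ Ico (j * 2 ^ i) ((j + 1) * 2 ^ i), z n‖ ^ 2)
        (fun _ _ => by positivity) (mem_range.2 (by omega))
  calc ‖S N‖ ^ 2 ≤ (∑ i ∈ range K, ‖S (m i) - S (m (i + 1))‖) ^ 2 := by
        rw [htel]
        gcongr
        exact norm_sum_le _ _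
    _ ≤ K * ∑ i ∈ range K, ‖S (m i) - S (m (i + 1))‖ ^ 2 := by
        simpa using sq_sum_le_card_mul_sum_sq (s := range K)
          (f := fun i => ‖S (m i) - S (m (i + 1))‖)
    _ ≤ _ := by
        gcongr with i hi
        exact hblock i hi

/-- The sum of the squared exponential sums over all dyadic blocks inside `[0, 2 ^ K]`. -/
noncomputable def dyadicSq (b : ℕ → ℕ) (K h : ℕ) (t : ℝ) : ℝ :=
  ∑ i ∈ range K, ∑ j ∈ range (2 ^ (K - i)),
    ‖∑ n ∈ Ico (j * 2 ^ i) ((j + 1) * 2 ^ i), unitExp (h * (b n * t))‖ ^ 2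

lemma dyadicSq_nonneg (b : ℕ → ℕ) (K h : ℕ) (t : ℝ) : 0 ≤ dyadicSq b K h t := by
  unfold dyadicSq
  positivity

lemma measurable_dyadicSq (b : ℕ → ℕ) (K h : ℕ) : Measurable (dyadicSq b K h) := by
  have := continuous_unitExp
  unfold dyadicSq
  exact Continuous.measurable (by fun_prop)

lemma lintegral_dyadicSq {b : ℕ → ℕ} (hb : StrictMono b) (K : ℕ) {h : ℕ} (hh : h ≠ 0) (l : ℤ) :
    ∫⁻ t in Set.Ioc (l : ℝ) (l + 1), ENNReal.ofReal (dyadicSq b K h t)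
      = ENNReal.ofReal (K * 2 ^ K) := by
  have hblock (u v : ℕ) : ∫⁻ t in Set.Ioc (l : ℝ) (l + 1),
      ENNReal.ofReal (‖∑ n ∈ Ico u v, unitExp (h * (b n * t))‖ ^ 2)
        = ENNReal.ofReal ((v - u : ℕ) : ℝ) := by
    have := lintegral_norm_sq_sum_unitExp (Ico u v) (fun _ => 1) (fun n => ((h * b n : ℕ) : ℤ)) l
    simp only [Nat.cast_inj, mul_right_inj' hh, hb.injective.eq_iff, Int.cast_natCast] at this
    simp only [Nat.cast_mul, Complex.ofReal_one, one_mul, mul_assoc] at this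
    rw [this]
    congr 1
    rw [sum_congr rfl fun n hn => by rw [sum_ite_eq, if_pos hn]]
    simp
  have hmeas (u v : ℕ) : Measurable fun t : ℝ =>
      ENNReal.ofReal (‖∑ n ∈ Ico u v, unitExp (h * (b n * t))‖ ^ 2) := by
    have := continuous_unitExp
    exact (Continuous.measurable (by fun_prop)).ennreal_ofReal
  unfold dyadicSq
  simp_rw [ENNReal.ofReal_sum_of_nonneg (fun i (_ : i ∈ range K) =>
    sum_nonneg fun j (_ : j ∈ range (2 ^ (K - i))) => sq_nonneg _),
    ENNReal.ofReal_sum_of_nonneg (fun j (_ : j ∈ range _) => sq_nonneg _)]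
  rw [lintegral_finsetSum _ fun i _ => Finset.measurable_sum _ fun j _ => hmeas _ _]
  simp_rw [lintegral_finsetSum _ fun j _ => hmeas _ _, hblock]
  have hi : ∀ i ∈ range K, ∑ j ∈ range (2 ^ (K - i)),
      ENNReal.ofReal (((j + 1) * 2 ^ i - j * 2 ^ i : ℕ) : ℝ) = ENNReal.ofReal (2 ^ K) := by
    intro i hi
    have : ∀ j ∈ range (2 ^ (K - i)), ENNReal.ofReal (((j + 1) * 2 ^ i - j * 2 ^ i : ℕ) : ℝ)
        = ENNReal.ofReal (2 ^ i) := by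
      intro j _
      rw [← Nat.sub_mul, Nat.add_sub_cancel_left]
      simp
    rw [sum_congr rfl this, sum_const, card_range, nsmul_eq_mul, ← ENNReal.ofReal_natCast,
      ← ENNReal.ofReal_mul (by positivity)]
    congr 1
    push_cast
    rw [← pow_add, Nat.sub_add_cancel (mem_range.1 hi).le]
  rw [sum_congr rfl hi, sum_const, card_range, nsmul_eq_mul, ← ENNReal.ofReal_natCast,
    ← ENNReal.ofReal_mul (by positivity)]

/-- Almost everywhere control of all weighted dyadic square functions simultaneously. -/
lemma ae_exists_sum_dyadicSq_le {b : ℕ → ℕ} (hb : StrictMono b) {η : ℝ} (hη : 0 < η) (l : ℤ) :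
    ∀ᵐ t ∂(volume.restrict (Set.Ioc (l : ℝ) (l + 1))), ∃ A : ℝ, 0 ≤ A ∧ ∀ K : ℕ, ∀ F : Finset ℕ,
      ∑ h ∈ F, (h : ℝ) ^ (-(1 + η)) * dyadicSq b K h t ≤ A * (2 ^ (1 + η)) ^ K := by
  set f : ℕ × ℕ → ℝ → ℝ := fun p t =>
    ((2 : ℝ) ^ (1 + η))⁻¹ ^ p.1 * ((p.2 : ℝ) ^ (-(1 + η)) * dyadicSq b p.1 p.2 t) with hf
  set r : ℝ := ((2 : ℝ) ^ η)⁻¹ with hr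
  have hr0 : 0 ≤ r := by positivity
  have hr1 : r < 1 := inv_lt_one_of_one_lt₀ (Real.one_lt_rpow one_lt_two hη)
  set c : ℕ × ℕ → ℝ := fun p => (p.1 * r ^ p.1) * (p.2 : ℝ) ^ (-(1 + η)) with hc
  have h1 : Summable fun K : ℕ => (K : ℝ) * r ^ K := by
    simpa using summable_pow_mul_geometric_of_norm_lt_one 1
      (show ‖r‖ < 1 by rwa [Real.norm_of_nonneg hr0])
  have h2 : Summable fun h : ℕ => (h : ℝ) ^ (-(1 + η)) :=
    Real.summable_nat_rpow.2 (by linarith)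
  have hcs : Summable c := h1.mul_of_nonneg h2 (fun K => by positivity) (fun h => by positivity)
  have hf0 : ∀ p t, 0 ≤ f p t := fun p t => by
    have := dyadicSq_nonneg b p.1 p.2 t
    positivity
  have hle : ∀ p, ∫⁻ t in Set.Ioc (l : ℝ) (l + 1), ENNReal.ofReal (f p t)
      ≤ ENNReal.ofReal (c p) := by
    rintro ⟨K, h⟩
    rcases eq_or_ne h 0 with rfl | hh
    · have hz : (0 : ℝ) ^ (-(1 + η)) = 0 := Real.zero_rpow (by linarith)
      simp only [hf, Nat.cast_zero, hz, zero_mul, mul_zero, ENNReal.ofReal_zero, lintegral_zero]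
      exact zero_le
    · simp only [hf, hc, ← mul_assoc]
      have h0 : (0 : ℝ) ≤ ((2 : ℝ) ^ (1 + η))⁻¹ ^ K * (h : ℝ) ^ (-(1 + η)) := by positivity
      simp_rw [ENNReal.ofReal_mul h0]
      rw [lintegral_const_mul _ (measurable_dyadicSq b K h).ennreal_ofReal,
        lintegral_dyadicSq hb K hh, ← ENNReal.ofReal_mul h0]
      apply ENNReal.ofReal_le_ofReal
      apply le_of_eq
      have : r = ((2 : ℝ) ^ (1 + η))⁻¹ * 2 := by
        rw [hr, Real.rpow_add two_pos, Real.rpow_one]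
        field_simp
      rw [this, mul_pow]
      ring
  have hfm : ∀ p, Measurable (f p) := fun p =>
    ((measurable_dyadicSq b p.1 p.2).const_mul _).const_mul _
  have hc0 : ∀ p, 0 ≤ c p := fun p => by positivity
  filter_upwards [ae_summable_of_lintegral_le hfm hf0 hc0 hcs hle] with t ht
  refine ⟨∑' p, f p t, tsum_nonneg fun p => hf0 p t, fun K F => ?_⟩
  have h3 := ht.sum_le_tsum ({K} ×ˢ F) fun p _ => hf0 p t
  rw [sum_product, sum_singleton] at h3
  simp only [hf, ← mul_sum] at h3
  have hpos : (0 : ℝ) < (2 ^ (1 + η)) ^ K := by positivity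
  rw [inv_pow, inv_mul_le_iff₀ hpos, mul_comm] at h3
  exact h3

/-- The periodic second Bernoulli function without its constant term. -/
noncomputable def fractQuad (x : ℝ) : ℝ := Int.fract x ^ 2 - Int.fract x

lemma hasSum_fractQuad (x : ℝ) :
    HasSum (fun h : ℕ => 1 / (h : ℝ) ^ 2 * (unitExp (h * x)).re)
      (π ^ 2 * (fractQuad x + 1 / 6)) := by
  have h := hasSum_one_div_nat_pow_mul_cos one_ne_zero
    (x := Int.fract x) ⟨Int.fract_nonneg x, (Int.fract_lt_one x).le⟩
  convert h using 1
  · ext n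
    rw [← unitExp_mul_fract, unitExp_re]
    ring_nf
  · have hB : (Polynomial.map (algebraMap ℚ ℝ) (Polynomial.bernoulli (2 * 1))).eval (Int.fract x)
        = fractQuad x + 1 / 6 := by
      simp [Polynomial.bernoulli, sum_range_succ, fractQuad, bernoulli_one, bernoulli_two,
        Polynomial.eval_add]
      ring
    have hfac : (((2 * 1).factorial : ℕ) : ℝ) = 2 := by norm_num [Nat.factorial]
    rw [hB, hfac]
    ring

lemma fractQuad_add_sub_le {y δ : ℝ} (hδ0 : 0 ≤ δ) (hδ1 : δ ≤ 1) :
    fractQuad (y + δ) - fractQuad y ≤ 2 * δ * (Int.fract y - 1 / 2) + δ ^ 2 := by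
  have h0 := Int.fract_nonneg y
  have h1 := Int.fract_lt_one y
  unfold fractQuad
  rcases lt_or_ge (Int.fract y + δ) 1 with h | h
  · have : Int.fract (y + δ) = Int.fract y + δ := by
      rw [Int.fract_eq_iff]
      exact ⟨by linarith, h, ⌊y⌋, by rw [← Int.self_sub_floor]; ring⟩
    rw [this]
    nlinarith
  · have : Int.fract (y + δ) = Int.fract y + δ - 1 := by
      rw [Int.fract_eq_iff]
      exact ⟨by linarith, by linarith, ⌊y⌋ + 1, by rw [← Int.self_sub_floor]; push_cast; ring⟩
    rw [this]
    nlinarith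

lemma le_fractQuad_sub {y δ : ℝ} (hδ0 : 0 ≤ δ) (hδ1 : δ ≤ 1) :
    2 * δ * (Int.fract y - 1 / 2) - δ ^ 2 ≤ fractQuad y - fractQuad (y - δ) := by
  have h0 := Int.fract_nonneg y
  have h1 := Int.fract_lt_one y
  unfold fractQuad
  rcases le_or_gt δ (Int.fract y) with h | h
  · have : Int.fract (y - δ) = Int.fract y - δ := by
      rw [Int.fract_eq_iff]
      exact ⟨by linarith, by linarith, ⌊y⌋, by rw [← Int.self_sub_floor]; ring⟩
    rw [this]
    nlinarith
  · have : Int.fract (y - δ) = Int.fract y - δ + 1 := by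
      rw [Int.fract_eq_iff]
      exact ⟨by linarith, by linarith, ⌊y⌋ - 1, by rw [← Int.self_sub_floor]; push_cast; ring⟩
    rw [this]
    nlinarith

lemma norm_unitExp_sub_one_le {t η : ℝ} (ht : 0 ≤ t) (hη0 : 0 ≤ η) (hη1 : η < 1) :
    ‖unitExp t - 1‖ ≤ 2 * π * t ^ (1 - η) := by
  have hpi := Real.pi_gt_three
  rcases le_total t 1 with h | h
  · have h1 : ‖unitExp t - 1‖ ≤ 2 * π * t := by
      have := norm_exp_I_mul_ofReal_sub_one_le (x := 2 * π * t)
      rw [Real.norm_of_nonneg (by positivity), mul_comm] at this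
      exact this
    refine h1.trans ?_
    gcongr
    rcases ht.eq_or_lt with rfl | ht
    · rw [Real.zero_rpow (by linarith)]
    · simpa using Real.rpow_le_rpow_of_exponent_ge ht h (show 1 - η ≤ 1 by linarith)
  · have h1 : ‖unitExp t - 1‖ ≤ 2 := by
      calc _ ≤ ‖unitExp t‖ + ‖(1 : ℂ)‖ := norm_sub_le _ _
        _ = 2 := by rw [norm_unitExp, norm_one]; norm_num
    have h2 : 1 ≤ t ^ (1 - η) := Real.one_le_rpow h (by linarith)
    nlinarith

/-- Increments of the sum of `fractQuad` are controlled by weighted exponential sums. -/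
lemma abs_sum_fractQuad_add_sub_le (y : ℕ → ℝ) (s : Finset ℕ) {δ η B : ℝ} (hδ : 0 < δ)
    (hη0 : 0 ≤ η) (hη1 : η < 1)
    (hB : ∀ F : Finset ℕ, ∑ h ∈ F, (h : ℝ) ^ (-(1 + η)) * ‖∑ n ∈ s, unitExp (h * y n)‖ ≤ B) :
    |∑ n ∈ s, (fractQuad (y n + δ) - fractQuad (y n))| ≤ δ ^ (1 - η) * B := by
  set S : ℕ → ℂ := fun h => ∑ n ∈ s, unitExp (h * y n) with hS
  have hsum : HasSum (fun h : ℕ => 1 / (h : ℝ) ^ 2 * ((unitExp (h * δ) - 1) * S h).re)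
      (π ^ 2 * ∑ n ∈ s, (fractQuad (y n + δ) - fractQuad (y n))) := by
    have := hasSum_sum fun n (_ : n ∈ s) => (hasSum_fractQuad (y n + δ)).sub (hasSum_fractQuad (y n))
    convert! this using 1
    · ext h
      simp only [hS, mul_sum, Complex.re_sum]
      refine sum_congr rfl fun n _ => ?_
      rw [mul_add (h : ℝ), unitExp_add, ← mul_sub, ← Complex.sub_re]
      ring_nf
    · rw [mul_sum]
      exact sum_congr rfl fun n _ => by ring
  have hterm : ∀ h : ℕ, |1 / (h : ℝ) ^ 2 * ((unitExp (h * δ) - 1) * S h).re|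
      ≤ 2 * π * δ ^ (1 - η) * ((h : ℝ) ^ (-(1 + η)) * ‖S h‖) := by
    intro h
    rcases Nat.eq_zero_or_pos h with rfl | hpos
    · simp only [Nat.cast_zero]
      norm_num
      positivity
    have hpos' : (0 : ℝ) < h := by exact_mod_cast hpos
    rw [abs_mul, abs_of_nonneg (by positivity : (0 : ℝ) ≤ 1 / (h : ℝ) ^ 2)]
    calc 1 / (h : ℝ) ^ 2 * |((unitExp (h * δ) - 1) * S h).re|
        ≤ 1 / (h : ℝ) ^ 2 * ‖(unitExp (h * δ) - 1) * S h‖ := by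
          gcongr
          exact Complex.abs_re_le_norm _
      _ ≤ 1 / (h : ℝ) ^ 2 * (2 * π * (h * δ) ^ (1 - η) * ‖S h‖) := by
          rw [norm_mul]
          gcongr
          exact norm_unitExp_sub_one_le (by positivity) hη0 hη1
      _ = 2 * π * δ ^ (1 - η) * (1 / (h : ℝ) ^ 2 * (h : ℝ) ^ (1 - η) * ‖S h‖) := by
          rw [Real.mul_rpow hpos'.le hδ.le]
          ring
      _ = _ := by
          congr 3
          rw [one_div, ← Real.rpow_natCast, ← Real.rpow_neg hpos'.le, ← Real.rpow_add hpos']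
          congr 1
          push_cast
          ring
  have hfin : ∀ F : Finset ℕ, |∑ h ∈ F, 1 / (h : ℝ) ^ 2 * ((unitExp (h * δ) - 1) * S h).re|
      ≤ 2 * π * δ ^ (1 - η) * B := fun F => by
    calc _ ≤ ∑ h ∈ F, |1 / (h : ℝ) ^ 2 * ((unitExp (h * δ) - 1) * S h).re| :=
          abs_sum_le_sum_abs _ _
      _ ≤ ∑ h ∈ F, 2 * π * δ ^ (1 - η) * ((h : ℝ) ^ (-(1 + η)) * ‖S h‖) :=
          sum_le_sum fun h _ => hterm h
      _ ≤ _ := by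
          rw [← mul_sum]
          gcongr
          exact hB F
  have hlim := le_of_tendsto' (continuous_abs.continuousAt.tendsto.comp hsum) hfin
  rw [abs_mul, abs_of_nonneg (by positivity : (0 : ℝ) ≤ π ^ 2)] at hlim
  have hB0 : 0 ≤ B := by simpa using hB ∅
  have hX : 0 ≤ δ ^ (1 - η) * B := by positivity
  have hpi := Real.pi_gt_three
  by_contra! hcon
  nlinarith [mul_lt_mul_of_pos_left hcon (by positivity : (0 : ℝ) < π ^ 2),
    mul_nonneg (mul_nonneg Real.pi_pos.le (by linarith : 0 ≤ π - 2)) hX]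

lemma norm_sum_unitExp_sub (s : Finset ℕ) (y : ℕ → ℝ) (h c : ℝ) :
    ‖∑ n ∈ s, unitExp (h * (y n - c))‖ = ‖∑ n ∈ s, unitExp (h * y n)‖ := by
  have : ∑ n ∈ s, unitExp (h * (y n - c)) = unitExp (-(h * c)) * ∑ n ∈ s, unitExp (h * y n) := by
    rw [mul_sum]
    refine sum_congr rfl fun n _ => ?_
    rw [← unitExp_add]
    ring_nf
  rw [this, norm_mul, norm_unitExp, one_mul]

lemma abs_sum_sawtooth_le (y : ℕ → ℝ) (s : Finset ℕ) {δ η B : ℝ} (hδ : 0 < δ) (hδ1 : δ ≤ 1)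
    (hη0 : 0 ≤ η) (hη1 : η < 1)
    (hB : ∀ F : Finset ℕ, ∑ h ∈ F, (h : ℝ) ^ (-(1 + η)) * ‖∑ n ∈ s, unitExp (h * y n)‖ ≤ B) :
    |∑ n ∈ s, (Int.fract (y n) - 1 / 2)| ≤ (δ ^ (-η) * B + #s * δ) / 2 := by
  have h1 := abs_le.1 (abs_sum_fractQuad_add_sub_le y s hδ hη0 hη1 hB)
  have h2 := abs_le.1 (abs_sum_fractQuad_add_sub_le (fun n => y n - δ) s hδ hη0 hη1
    (by simpa only [norm_sum_unitExp_sub] using hB))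
  simp only [sub_add_cancel] at h2
  have h3 := sum_le_sum fun n (_ : n ∈ s) => fractQuad_add_sub_le (y := y n) hδ.le hδ1
  have h4 := sum_le_sum fun n (_ : n ∈ s) => le_fractQuad_sub (y := y n) hδ.le hδ1
  rw [sum_add_distrib, ← mul_sum, sum_const, nsmul_eq_mul] at h3
  rw [sum_sub_distrib, ← mul_sum, sum_const, nsmul_eq_mul] at h4
  have hpow : δ ^ (1 - η) = δ * δ ^ (-η) := by
    rw [sub_eq_add_neg, Real.rpow_add hδ, Real.rpow_one]
  rw [hpow] at h1 h2
  set T := ∑ n ∈ s, (Int.fract (y n) - 1 / 2)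
  rw [abs_le]
  constructor
  · refine le_of_mul_le_mul_left (a := 2 * δ) ?_ (by positivity)
    nlinarith [h1.1]
  · refine le_of_mul_le_mul_left (a := 2 * δ) ?_ (by positivity)
    nlinarith [h2.2]

lemma ite_fract_lt_sub (x : ℝ) {β : ℝ} (hβ0 : 0 < β) (hβ1 : β ≤ 1) :
    (if 0 ≤ Int.fract x ∧ Int.fract x < β then (1 : ℝ) else 0) - β
      = (Int.fract (x - β) - 1 / 2) - (Int.fract x - 1 / 2) := by
  have h0 := Int.fract_nonneg x
  have h1 := Int.fract_lt_one x
  split_ifs with h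
  · have : Int.fract (x - β) = Int.fract x - β + 1 := by
      rw [Int.fract_eq_iff]
      exact ⟨by linarith, by linarith, ⌊x⌋ - 1, by rw [← Int.self_sub_floor]; push_cast; ring⟩
    rw [this]
    ring
  · have hb : β ≤ Int.fract x := by
      by_contra! hc
      exact h ⟨h0, hc⟩
    have : Int.fract (x - β) = Int.fract x - β := by
      rw [Int.fract_eq_iff]
      exact ⟨by linarith, by linarith, ⌊x⌋, by rw [← Int.self_sub_floor]; ring⟩
    rw [this]
    ring

lemma starDisc_bddAbove (N : ℕ) (x : ℕ → ℝ) : BddAbove (Set.range fun β : Set.Ioc (0 : ℝ) 1 =>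
    |(((Finset.Icc 1 N).filter fun n => 0 ≤ x n ∧ x n < (β : ℝ)).card : ℝ) / N - (β : ℝ)|) := by
  refine ⟨1, ?_⟩
  rintro _ ⟨⟨β, hβ0, hβ1⟩, rfl⟩
  have hcard : (((Finset.Icc 1 N).filter fun n => 0 ≤ x n ∧ x n < β).card : ℝ) ≤ N := by
    exact_mod_cast (card_filter_le _ _).trans (by simp)
  have h1 := div_le_one_of_le₀ hcard (Nat.cast_nonneg N)
  have h0 : (0 : ℝ) ≤ (((Finset.Icc 1 N).filter fun n => 0 ≤ x n ∧ x n < β).card : ℝ) / N := by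
    positivity
  exact abs_le.2 ⟨by linarith, by linarith⟩

lemma card_filter_sub_eq_sum (N : ℕ) (x : ℕ → ℝ) (β : ℝ) :
    (((Finset.Icc 1 N).filter fun n => 0 ≤ x n ∧ x n < β).card : ℝ) - N * β
      = ∑ n ∈ Finset.Icc 1 N, ((if 0 ≤ x n ∧ x n < β then (1 : ℝ) else 0) - β) := by
  rw [sum_sub_distrib, sum_boole, sum_const, Nat.card_Icc, nsmul_eq_mul, Nat.add_sub_cancel]

/-- An inequality of Erdős–Turán type for the star-discrepancy. -/
lemma mul_starDisc_fract_le (x : ℕ → ℝ) {N : ℕ} (hN : N ≠ 0) {δ η B : ℝ} (hδ : 0 < δ)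
    (hδ1 : δ ≤ 1) (hη0 : 0 ≤ η) (hη1 : η < 1)
    (hB : ∀ F : Finset ℕ,
      ∑ h ∈ F, (h : ℝ) ^ (-(1 + η)) * ‖∑ n ∈ Icc 1 N, unitExp (h * x n)‖ ≤ B) :
    N * starDisc N (fun n => Int.fract (x n)) ≤ δ ^ (-η) * B + N * δ := by
  have hN0 : (0 : ℝ) < N := by exact_mod_cast Nat.pos_of_ne_zero hN
  rw [mul_comm, ← le_div_iff₀ hN0]
  have : Nonempty (Set.Ioc (0 : ℝ) 1) := ⟨⟨1, by simp⟩⟩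
  refine ciSup_le fun β => ?_
  obtain ⟨β, hβ0, hβ1⟩ := β
  rw [le_div_iff₀ hN0, ← abs_of_pos hN0, ← abs_mul, abs_of_pos hN0, sub_mul,
    div_mul_cancel₀ _ hN0.ne', mul_comm β, card_filter_sub_eq_sum]
  simp only [ite_fract_lt_sub _ hβ0 hβ1]
  rw [sum_sub_distrib]
  have h1 := abs_sum_sawtooth_le x (Icc 1 N) hδ hδ1 hη0 hη1 hB
  have h2 := abs_sum_sawtooth_le (fun n => x n - β) (Icc 1 N) hδ hδ1 hη0 hη1
    (by simpa only [norm_sum_unitExp_sub] using hB)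
  rw [Nat.card_Icc, Nat.add_sub_cancel] at h1 h2
  refine (abs_sub _ _).trans ?_
  linarith

lemma intervalIntegrable_ite_sub_mul (x : ℝ) {f : ℝ → ℂ} (hf : Continuous f) :
    IntervalIntegrable (fun β : ℝ =>
      (((if 0 ≤ x ∧ x < β then (1 : ℝ) else 0) - β : ℝ) : ℂ) * f β) volume 0 1 := by
  refine IntervalIntegrable.mul_continuousOn ?_ hf.continuousOn
  have hmono : Monotone fun β : ℝ => if 0 ≤ x ∧ x < β then (1 : ℝ) else 0 := by
    intro u v huv
    dsimp only
    split_ifs with h1 h2 <;> try norm_num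
    exact h2 ⟨h1.1, h1.2.trans_le huv⟩
  have h : IntervalIntegrable (fun β : ℝ => (if 0 ≤ x ∧ x < β then (1 : ℝ) else 0) - β)
      volume 0 1 :=
    hmono.intervalIntegrable.sub (continuous_id.intervalIntegrable 0 1)
  exact ⟨h.1.ofReal, h.2.ofReal⟩

lemma unitExp_eq_integral {h : ℕ} (hh : h ≠ 0) {x : ℝ} (hx0 : 0 ≤ x) (hx1 : x < 1) :
    unitExp (h * x) = -∫ β in (0 : ℝ)..1,
      (((if 0 ≤ x ∧ x < β then (1 : ℝ) else 0) - β : ℝ) : ℂ) *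
        (2 * π * h * I * unitExp (h * β)) := by
  set f : ℝ → ℂ := fun β => 2 * π * h * I * unitExp (h * β) with hf
  have hfc : Continuous f := continuous_const.mul (continuous_unitExp.comp (by fun_prop))
  have hd (β : ℝ) : HasDerivAt (fun t : ℝ => unitExp (h * t)) (f β) β := by
    simpa [hf] using hasDerivAt_unitExp h β
  have hone : unitExp (h * 1) = 1 := by
    simpa using unitExp_intCast h
  have hzero : unitExp (h * 0) = 1 := by
    simpa using unitExp_intCast 0
  have h1 : ∫ β in (0 : ℝ)..1, (Set.Ioi x).indicator f β = 1 - unitExp (h * x) := by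
    rw [intervalIntegral.integral_of_le zero_le_one, setIntegral_indicator measurableSet_Ioi,
      Set.Ioc_inter_Ioi, sup_of_le_right hx0, ← intervalIntegral.integral_of_le hx1.le,
      intervalIntegral.integral_eq_sub_of_hasDerivAt (fun β _ => hd β)
        (hfc.intervalIntegrable _ _), hone]
  have h2 : ∫ β in (0 : ℝ)..1, (β : ℂ) * f β = 1 := by
    have hne : (2 * π * h * I : ℂ) ≠ 0 := by simp [hh, Real.pi_ne_zero]
    have hd2 (β : ℝ) : HasDerivAt (fun t : ℝ => (t : ℂ) * unitExp (h * t)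
        - unitExp (h * t) / (2 * π * h * I)) ((β : ℂ) * f β) β := by
      convert! ((hasDerivAt_id β).ofReal_comp.mul (hd β)).sub
        ((hd β).div_const (2 * π * h * I)) using 1
      simp only [hf, mul_div_cancel_left₀ _ hne]
      simp
    rw [intervalIntegral.integral_eq_sub_of_hasDerivAt (fun β _ => hd2 β)
      ((Complex.continuous_ofReal.mul hfc).intervalIntegrable _ _), hone, hzero]
    simp
  have hsplit (β : ℝ) : (((if 0 ≤ x ∧ x < β then (1 : ℝ) else 0) - β : ℝ) : ℂ) * f β
      = (Set.Ioi x).indicator f β - β * f β := by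
    by_cases hβ : x < β <;> simp [hx0, hβ, sub_mul]
  rw [intervalIntegral.integral_congr fun β _ => hsplit β, intervalIntegral.integral_sub, h1, h2]
  · ring
  · rw [intervalIntegrable_iff_integrableOn_Ioc_of_le zero_le_one]
    exact ((hfc.integrableOn_Icc).mono_set Set.Ioc_subset_Icc_self).indicator measurableSet_Ioi
  · exact (Complex.continuous_ofReal.mul hfc).intervalIntegrable _ _

/-- Exponential sums are bounded by the discrepancy (a case of Koksma's inequality). -/
lemma norm_sum_unitExp_le_starDisc (x : ℕ → ℝ) {N h : ℕ} (hN : N ≠ 0) (hh : h ≠ 0) :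
    ‖∑ n ∈ Icc 1 N, unitExp (h * x n)‖
      ≤ 2 * π * h * (N * starDisc N (fun n => Int.fract (x n))) := by
  have hN0 : (0 : ℝ) < N := by exact_mod_cast Nat.pos_of_ne_zero hN
  have hfc : Continuous fun β : ℝ => 2 * π * h * I * unitExp (h * β) :=
    continuous_const.mul (continuous_unitExp.comp (by fun_prop))
  have hrep : ∑ n ∈ Icc 1 N, unitExp (h * x n) = -∫ β in (0 : ℝ)..1, (((((Icc 1 N).filter fun n =>
      0 ≤ Int.fract (x n) ∧ Int.fract (x n) < β).card : ℝ) - N * β : ℝ) : ℂ) *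
        (2 * π * h * I * unitExp (h * β)) := by
    have h1 : ∀ n ∈ Icc 1 N, unitExp (h * x n) = _ := fun n _ =>
      (unitExp_mul_fract h (x n)).symm.trans
        (unitExp_eq_integral hh (Int.fract_nonneg (x n)) (Int.fract_lt_one (x n)))
    rw [sum_congr rfl h1, sum_neg_distrib, ← intervalIntegral.integral_finsetSum
      fun n _ => intervalIntegrable_ite_sub_mul _ hfc]
    congr 2
    ext β
    rw [card_filter_sub_eq_sum N (fun n => Int.fract (x n)), Complex.ofReal_sum, sum_mul]
  rw [hrep, norm_neg]
  refine (intervalIntegral.norm_integral_le_of_norm_le_const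
    (C := 2 * π * h * (N * starDisc N (fun n => Int.fract (x n)))) ?_).trans (by simp)
  intro β hβ
  rw [Set.uIoc_of_le zero_le_one] at hβ
  have hle := le_ciSup (starDisc_bddAbove N (fun n => Int.fract (x n))) ⟨β, hβ⟩
  rw [norm_mul, Complex.norm_real, Real.norm_eq_abs, mul_comm]
  have hnorm : ‖(2 * π * h * I * unitExp (h * β) : ℂ)‖ = 2 * π * h := by
    simp [norm_unitExp, abs_of_pos Real.pi_pos]
  rw [hnorm]
  gcongr
  calc _ = (N : ℝ) * |(((Icc 1 N).filter fun n =>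
        0 ≤ Int.fract (x n) ∧ Int.fract (x n) < β).card : ℝ) / N - β| := by
        rw [← abs_of_pos hN0, ← abs_mul, abs_of_pos hN0, mul_sub, mul_div_cancel₀ _ hN0.ne']
    _ ≤ _ := mul_le_mul_of_nonneg_left hle hN0.le

lemma sum_Icc_one_eq_sum_range {M : Type*} [AddCommMonoid M] (f : ℕ → M) (N : ℕ) :
    ∑ n ∈ Icc 1 N, f n = ∑ n ∈ range N, f (n + 1) := by
  rw [range_eq_Ico, sum_Ico_add' f 0 N 1, zero_add, Finset.Ico_add_one_right_eq_Icc]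

lemma sum_rpow_mul_norm_sum_le {a : ℕ → ℕ} {η A t : ℝ} {K N : ℕ} (hη : 0 < η) (hN : N < 2 ^ K)
    (hA : ∀ F : Finset ℕ, ∑ h ∈ F, (h : ℝ) ^ (-(1 + η)) * dyadicSq (fun n => a (n + 1)) K h t
      ≤ A * (2 ^ (1 + η)) ^ K) (F : Finset ℕ) :
    ∑ h ∈ F, (h : ℝ) ^ (-(1 + η)) * ‖∑ n ∈ Icc 1 N, unitExp (h * (a n * t))‖
      ≤ ((2 : ℝ) ^ K) ^ ((1 + η) / 2) * (∑' h : ℕ, (h : ℝ) ^ (-(1 + η)) + K * A) := by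
  set L : ℝ := ((2 : ℝ) ^ K) ^ ((1 + η) / 2) with hL
  have hL0 : 0 < L := by positivity
  have hL2 : ((2 : ℝ) ^ (1 + η)) ^ K = L ^ 2 := by
    rw [hL, ← Real.rpow_natCast, ← Real.rpow_natCast, ← Real.rpow_natCast, ← Real.rpow_mul two_pos.le,
      ← Real.rpow_mul two_pos.le, ← Real.rpow_mul two_pos.le]
    congr 1
    push_cast
    ring
  have hZ : Summable fun h : ℕ => (h : ℝ) ^ (-(1 + η)) :=
    Real.summable_nat_rpow.2 (by linarith)
  have hterm (h : ℕ) : ‖∑ n ∈ Icc 1 N, unitExp (h * (a n * t))‖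
      ≤ L + K / L * dyadicSq (fun n => a (n + 1)) K h t := by
    have hd := norm_sum_range_sq_le_dyadic (fun n => unitExp (h * (a (n + 1) * t))) hN
    rw [sum_Icc_one_eq_sum_range]
    set S := ‖∑ n ∈ range N, unitExp (h * (a (n + 1) * t))‖
    change S ^ 2 ≤ K * dyadicSq (fun n => a (n + 1)) K h t at hd
    have h1 : S ≤ L + S ^ 2 / L := by
      have : 0 ≤ S ^ 2 / L := by positivity
      rcases le_total S L with h | h
      · linarith
      · have : S ≤ S ^ 2 / L := by
          rw [le_div_iff₀ hL0]
          nlinarith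
        linarith
    calc S ≤ L + S ^ 2 / L := h1
      _ ≤ L + (K * dyadicSq (fun n => a (n + 1)) K h t) / L := by gcongr
      _ = _ := by ring
  calc _ ≤ ∑ h ∈ F, (h : ℝ) ^ (-(1 + η)) *
        (L + K / L * dyadicSq (fun n => a (n + 1)) K h t) := by
        gcongr with h
        exact hterm h
    _ = L * ∑ h ∈ F, (h : ℝ) ^ (-(1 + η)) + K / L *
        ∑ h ∈ F, (h : ℝ) ^ (-(1 + η)) * dyadicSq (fun n => a (n + 1)) K h t := by
        rw [mul_sum, mul_sum, ← sum_add_distrib]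
        exact sum_congr rfl fun h _ => by ring
    _ ≤ L * ∑' h : ℕ, (h : ℝ) ^ (-(1 + η)) + K / L * (A * L ^ 2) := by
        rw [← hL2]
        gcongr
        · exact hZ.sum_le_tsum F fun h _ => by positivity
        · exact hA F
    _ = _ := by
        field_simp

lemma exists_mul_starDisc_le {a : ℕ → ℕ} {η A t : ℝ} (hη : 0 < η) (hη1 : η < 1) (hA0 : 0 ≤ A)
    (hA : ∀ K : ℕ, ∀ F : Finset ℕ, ∑ h ∈ F, (h : ℝ) ^ (-(1 + η)) *
      dyadicSq (fun n => a (n + 1)) K h t ≤ A * (2 ^ (1 + η)) ^ K) :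
    ∃ C : ℝ, 0 ≤ C ∧ ∀ N : ℕ, N ≠ 0 → (N : ℝ) * starDisc N (fun n => Int.fract ((a n : ℝ) * t))
      ≤ C * (N : ℝ) ^ (1 / 2 + 3 * η) := by
  set Z : ℝ := ∑' h : ℕ, (h : ℝ) ^ (-(1 + η)) with hZ
  have hZ0 : 0 ≤ Z := tsum_nonneg fun h => by positivity
  have hlog2 : 0 < Real.log 2 := Real.log_pos one_lt_two
  set M : ℝ := Z + A / (η * Real.log 2) + 1 with hM
  have hM0 : 0 ≤ M := by positivity
  refine ⟨M * 2 ^ (1 / 2 + 3 * η), by positivity, fun N hN => ?_⟩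
  set K := Nat.log 2 N + 1 with hK
  have hNK : N < 2 ^ K := Nat.lt_pow_succ_log_self one_lt_two N
  set X : ℝ := (2 : ℝ) ^ K with hX
  have hX1 : 1 ≤ X := one_le_pow₀ one_le_two
  have hX0 : 0 < X := by positivity
  have hNX : (N : ℝ) ≤ X := by
    rw [hX]
    exact_mod_cast hNK.le
  have hXN : X ≤ 2 * N := by
    have := Nat.pow_log_le_self 2 hN
    rw [hX, hK, pow_succ, mul_comm]
    gcongr
    exact_mod_cast this
  have hKX : (K : ℝ) ≤ X ^ η / (η * Real.log 2) := by
    have := Real.log_le_rpow_div hX0.le hη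
    rw [hX, Real.log_pow, ← hX] at this
    rw [le_div_iff₀ (by positivity)]
    rw [le_div_iff₀ hη] at this
    linarith
  have hmain := mul_starDisc_fract_le (fun n => (a n : ℝ) * t) hN (inv_pos.2 hX0)
    (inv_le_one_of_one_le₀ hX1) hη.le hη1 (sum_rpow_mul_norm_sum_le hη hNK (hA K))
  rw [Real.inv_rpow hX0.le, Real.rpow_neg hX0.le, inv_inv] at hmain
  have hXη : 1 ≤ X ^ η := Real.one_le_rpow hX1 hη.le
  have hhalf : 1 ≤ X ^ ((1 + η) / 2) := Real.one_le_rpow hX1 (by positivity)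
  have hlast : (N : ℝ) * X⁻¹ ≤ X ^ η * (X ^ ((1 + η) / 2) * X ^ η) := by
    calc (N : ℝ) * X⁻¹ ≤ 1 := by
          rw [← div_eq_mul_inv]
          exact div_le_one_of_le₀ hNX hX0.le
      _ ≤ _ := one_le_mul_of_one_le_of_one_le hXη (one_le_mul_of_one_le_of_one_le hhalf hXη)
  calc _ ≤ X ^ η * (X ^ ((1 + η) / 2) * (Z + K * A)) + N * X⁻¹ := hmain
    _ ≤ X ^ η * (X ^ ((1 + η) / 2) * (Z * X ^ η + X ^ η / (η * Real.log 2) * A))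
        + X ^ η * (X ^ ((1 + η) / 2) * X ^ η) := by
        refine add_le_add ?_ hlast
        gcongr
        exact le_mul_of_one_le_right hZ0 hXη
    _ = M * (X ^ η * X ^ ((1 + η) / 2) * X ^ η) := by
        rw [hM]
        ring
    _ = M * X ^ (η + (1 + η) / 2 + η) := by
        rw [Real.rpow_add hX0, Real.rpow_add hX0]
    _ ≤ M * X ^ (1 / 2 + 3 * η) := by
        refine mul_le_mul_of_nonneg_left (Real.rpow_le_rpow_of_exponent_le hX1 ?_) hM0
        linarith
    _ ≤ M * (2 * N) ^ (1 / 2 + 3 * η) := by gcongr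
    _ = _ := by
        rw [Real.mul_rpow two_pos.le (Nat.cast_nonneg N)]
        ring

lemma ae_mul_starDisc_le {a : ℕ → ℕ} (ha : StrictMono fun n => a (n + 1)) :
    ∀ᵐ t ∂(volume : Measure ℝ), ∀ ε > 0, ∃ C : ℝ, ∀ N : ℕ,
      (N : ℝ) * starDisc N (fun n => Int.fract ((a n : ℝ) * t)) ≤ C * (N : ℝ) ^ ((1 : ℝ) / 2 + ε) := by
  refine ae_volume_of_forall_Ioc fun l => ?_
  have hall : ∀ᵐ t ∂(volume.restrict (Set.Ioc (l : ℝ) (l + 1))), ∀ m : ℕ, ∃ A : ℝ, 0 ≤ A ∧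
      ∀ K : ℕ, ∀ F : Finset ℕ, ∑ h ∈ F, (h : ℝ) ^ (-(1 + 1 / ((m : ℝ) + 2))) *
        dyadicSq (fun n => a (n + 1)) K h t ≤ A * (2 ^ (1 + 1 / ((m : ℝ) + 2))) ^ K :=
    ae_all_iff.2 fun m => ae_exists_sum_dyadicSq_le ha (by positivity) l
  filter_upwards [hall] with t ht ε hε
  obtain ⟨m, hm⟩ := exists_nat_one_div_lt (show 0 < ε / 3 by positivity)
  have hm2 : 1 / ((m : ℝ) + 2) ≤ 1 / ((m : ℝ) + 1) := by gcongr; norm_num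
  obtain ⟨A, hA0, hA⟩ := ht m
  obtain ⟨C, hC0, hC⟩ := exists_mul_starDisc_le (by positivity)
    (by rw [div_lt_one (by positivity)]; linarith [(Nat.cast_nonneg m : (0 : ℝ) ≤ m)]) hA0 hA
  refine ⟨C, fun N => ?_⟩
  rcases eq_or_ne N 0 with rfl | hN
  · simp only [Nat.cast_zero, zero_mul]
    positivity
  · refine (hC N hN).trans ?_
    gcongr
    · exact_mod_cast Nat.one_le_iff_ne_zero.2 hN
    · linarith

/-- The number of representations of `v` as a difference of two elements of `A`. -/
def diffCount (A : Finset ℤ) (v : ℤ) : ℕ := #{p ∈ A ×ˢ A | p.1 - p.2 = v}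

/-- The nonzero differences of elements of `A`. -/
def nonzeroDiffs (A : Finset ℤ) : Finset ℤ := ((A ×ˢ A).image fun p => p.1 - p.2).erase 0

lemma sum_sq_diffCount_le (A V : Finset ℤ) : ∑ v ∈ V, diffCount A v ^ 2 ≤ addEnergy A := by
  have h1 : ∀ v ∈ V, diffCount A v ^ 2 = #({q ∈ (A ×ˢ A ×ˢ A ×ˢ A) |
      q.1 - q.2.1 = v ∧ q.2.2.1 - q.2.2.2 = v} : Finset (ℤ × ℤ × ℤ × ℤ)) := by
    intro v _
    rw [sq, diffCount, ← card_product]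
    refine card_bij' (fun q _ => (q.1.1, q.1.2, q.2.1, q.2.2))
      (fun q _ => ((q.1, q.2.1), (q.2.2.1, q.2.2.2))) ?_ ?_ ?_ ?_
    · rintro ⟨⟨x, y⟩, ⟨z, w⟩⟩
      simp only [mem_product, mem_filter]
      tauto
    · rintro ⟨x, y, z, w⟩
      simp only [mem_product, mem_filter]
      tauto
    · simp
    · simp
  rw [sum_congr rfl h1, ← card_biUnion]
  · refine card_le_card ?_
    intro q hq
    simp only [mem_biUnion, mem_filter] at hq ⊢
    obtain ⟨v, _, hA, h2, h3⟩ := hq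
    exact ⟨hA, h2.trans h3.symm⟩
  · intro v _ w _ hvw
    refine disjoint_left.2 fun q hq hq' => hvw ?_
    simp only [mem_filter] at hq hq'
    exact hq.2.1.symm.trans hq'.2.1

lemma norm_sq_sum_unitExp_eq (A : Finset ℤ) (h : ℤ) (t : ℝ) :
    ((‖∑ x ∈ A, unitExp (h * (x * t))‖ ^ 2 : ℝ) : ℂ)
      = #A + ∑ v ∈ nonzeroDiffs A, ((diffCount A v : ℝ) : ℂ) * unitExp ((h * v : ℤ) * t) := by
  have h1 : ((‖∑ x ∈ A, unitExp (h * (x * t))‖ ^ 2 : ℝ) : ℂ)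
      = ∑ p ∈ A ×ˢ A, unitExp ((h * (p.1 - p.2) : ℤ) * t) := by
    rw [Complex.ofReal_pow, ← Complex.mul_conj', map_sum, sum_mul_sum, sum_product]
    refine sum_congr rfl fun x _ => sum_congr rfl fun y _ => ?_
    rw [conj_unitExp, ← unitExp_add]
    congr 1
    push_cast
    ring
  have h2 : ∑ p ∈ A ×ˢ A, unitExp ((h * (p.1 - p.2) : ℤ) * t)
      = ∑ v ∈ (A ×ˢ A).image fun p => p.1 - p.2,
        ((diffCount A v : ℝ) : ℂ) * unitExp ((h * v : ℤ) * t) := by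
    rw [← sum_fiberwise_of_maps_to (fun p hp => mem_image_of_mem (fun p : ℤ × ℤ => p.1 - p.2) hp)]
    refine sum_congr rfl fun v _ => ?_
    rw [sum_congr rfl fun p hp => by rw [(mem_filter.1 hp).2], sum_const, nsmul_eq_mul, diffCount]
    simp
  have hzero : diffCount A 0 = #A := by
    rw [diffCount, ← diag_card A]
    congr 1
    ext ⟨x, y⟩
    simp only [mem_filter, mem_product, mem_diag, sub_eq_zero]
    constructor
    · rintro ⟨⟨hx, _⟩, h⟩
      exact ⟨hx, h⟩
    · rintro ⟨hx, rfl⟩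
      exact ⟨⟨hx, hx⟩, rfl⟩
  rw [h1, h2, nonzeroDiffs]
  by_cases hA : (0 : ℤ) ∈ (A ×ˢ A).image fun p => p.1 - p.2
  · rw [← add_sum_erase _ _ hA, hzero]
    simp [unitExp]
  · have hAe : A = ∅ := by
      by_contra hne
      obtain ⟨x, hx⟩ := nonempty_iff_ne_empty.2 hne
      exact hA (mem_image.2 ⟨(x, x), by simp [hx], by simp⟩)
    simp [hAe]

lemma card_filter_dilation_le {P : Finset ℕ} (hP : ∀ p ∈ P, p.Prime) {V : Finset ℤ} {W : ℕ} {v : ℤ}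
    (hW : #(P.filter fun q : ℕ => (q : ℤ) ∣ v) ≤ W) {p : ℕ} (hp : p ∈ P) :
    #{i ∈ P ×ˢ V | (p : ℤ) * v = i.1 * i.2} ≤ 1 + W := by
  have hmaps : ∀ i ∈ ({i ∈ P ×ˢ V | (p : ℤ) * v = i.1 * i.2} : Finset (ℕ × ℤ)),
      i.1 ∈ insert p (P.filter fun q : ℕ => (q : ℤ) ∣ v) := by
    rintro ⟨q, w⟩ hi
    simp only [mem_filter, mem_product] at hi
    obtain ⟨⟨hq, _⟩, heq⟩ := hi
    rw [mem_insert, mem_filter]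
    by_cases hqp : q = p
    · exact Or.inl hqp
    · refine Or.inr ⟨hq, ?_⟩
      have hdvd : (q : ℤ) ∣ p * v := ⟨w, heq⟩
      have hcop : IsCoprime (q : ℤ) (p : ℤ) :=
        Nat.isCoprime_iff_coprime.2 ((Nat.coprime_primes (hP q hq) (hP p hp)).2 hqp)
      exact hcop.dvd_of_dvd_mul_left hdvd
  have hinj : Set.InjOn (fun i : ℕ × ℤ => i.1)
      ({i ∈ P ×ˢ V | (p : ℤ) * v = i.1 * i.2} : Finset (ℕ × ℤ)) := by
    rintro ⟨q, w⟩ hi ⟨q', w'⟩ hi' hqq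
    simp only [coe_filter, Set.mem_ofPred_eq, mem_product] at hi hi' hqq
    subst hqq
    have hq0 : (q : ℤ) ≠ 0 := by exact_mod_cast (hP q hi.1.1).ne_zero
    rw [mul_left_cancel₀ hq0 (hi.2.symm.trans hi'.2)]
  refine (card_le_card_of_injOn _ hmaps hinj).trans ((card_insert_le _ _).trans ?_)
  omega

lemma sum_dilation_le {P : Finset ℕ} (hP : ∀ p ∈ P, p.Prime) {V : Finset ℤ} {W : ℕ}
    (hW : ∀ v ∈ V, #(P.filter fun q : ℕ => (q : ℤ) ∣ v) ≤ W) (r : ℤ → ℝ) :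
    ∑ i ∈ P ×ˢ V, ∑ i' ∈ P ×ˢ V,
      (if ((i.1 : ℤ) * i.2) = (i'.1 : ℤ) * i'.2 then r i.2 * r i'.2 else 0)
      ≤ #P * (1 + W) * ∑ v ∈ V, r v ^ 2 := by
  set s := P ×ˢ V with hs
  set k : ℕ × ℤ → ℤ := fun i => (i.1 : ℤ) * i.2 with hk
  have hsymm : ∑ i ∈ s, ∑ i' ∈ s, (if k i = k i' then r i'.2 ^ 2 / 2 else 0)
      = ∑ i ∈ s, ∑ i' ∈ s, (if k i = k i' then r i.2 ^ 2 / 2 else 0) := by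
    rw [sum_comm]
    simp only [eq_comm]
  calc _ ≤ ∑ i ∈ s, ∑ i' ∈ s, ((if k i = k i' then r i.2 ^ 2 / 2 else 0)
        + (if k i = k i' then r i'.2 ^ 2 / 2 else 0)) := by
        refine sum_le_sum fun i _ => sum_le_sum fun i' _ => ?_
        change (if k i = k i' then _ else _) ≤ _
        split_ifs
        · nlinarith [sq_nonneg (r i.2 - r i'.2)]
        · simp
    _ = ∑ i ∈ s, ∑ i' ∈ s, (if k i = k i' then r i.2 ^ 2 else 0) := by
        simp only [sum_add_distrib]
        rw [hsymm, ← sum_add_distrib]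
        refine sum_congr rfl fun i _ => ?_
        rw [← sum_add_distrib]
        refine sum_congr rfl fun i' _ => ?_
        split_ifs <;> ring
    _ ≤ ∑ i ∈ s, (1 + W) * r i.2 ^ 2 := by
        refine sum_le_sum fun i hi => ?_
        rw [hs, mem_product] at hi
        rw [← sum_filter, sum_const, nsmul_eq_mul]
        gcongr
        exact_mod_cast card_filter_dilation_le hP (hW _ hi.2) hi.1
    _ = _ := by
        rw [hs, sum_product]
        simp only [sum_const, nsmul_eq_mul, ← mul_sum]
        ring

/-- The off-diagonal part of `∑ p ∈ P, ‖∑ x ∈ A, e(p x t)‖ ^ 2`. -/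
noncomputable def offDiagSum (A : Finset ℤ) (P : Finset ℕ) (t : ℝ) : ℂ :=
  ∑ i ∈ P ×ˢ nonzeroDiffs A,
    ((diffCount A i.2 : ℝ) : ℂ) * unitExp (((i.1 : ℤ) * i.2 : ℤ) * t)

lemma sum_norm_sq_eq_add_offDiagSum (A : Finset ℤ) (P : Finset ℕ) (t : ℝ) :
    ((∑ p ∈ P, ‖∑ x ∈ A, unitExp (p * (x * t))‖ ^ 2 : ℝ) : ℂ)
      = #P * #A + offDiagSum A P t := by
  rw [Complex.ofReal_sum, offDiagSum, sum_product]
  have h (p : ℕ) := norm_sq_sum_unitExp_eq A p t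
  simp only [Int.cast_natCast] at h
  rw [sum_congr rfl fun p _ => h p, sum_add_distrib, sum_const, nsmul_eq_mul]

lemma lintegral_offDiagSum_le (A : Finset ℤ) {P : Finset ℕ} (hP : ∀ p ∈ P, p.Prime) {W : ℕ}
    (hW : ∀ v ∈ nonzeroDiffs A, #(P.filter fun q : ℕ => (q : ℤ) ∣ v) ≤ W) (l : ℤ) :
    ∫⁻ t in Set.Ioc (l : ℝ) (l + 1), ENNReal.ofReal (‖offDiagSum A P t‖ ^ 2)
      ≤ ENNReal.ofReal (#P * (1 + W) * addEnergy A) := by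
  unfold offDiagSum
  rw [lintegral_norm_sq_sum_unitExp (P ×ˢ nonzeroDiffs A) (fun i => (diffCount A i.2 : ℝ))
    (fun i => (i.1 : ℤ) * i.2) l]
  refine ENNReal.ofReal_le_ofReal ((sum_dilation_le hP hW
    fun v => (diffCount A v : ℝ)).trans ?_)
  gcongr
  exact_mod_cast sum_sq_diffCount_le A (nonzeroDiffs A)

lemma two_pow_le_card_primes {l : ℕ} (hl : 2 ≤ l) :
    (2 : ℝ) ^ l ≤ 4 * l * #((range (2 ^ l + 1)).filter Nat.Prime) := by
  have hlog2 : 0 < Real.log 2 := Real.log_pos one_lt_two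
  have h1 := (Chebyshev.psi_ge (2 ^ l)).trans (Chebyshev.psi_le_primeCounting_mul_log (2 ^ l))
  have hcount : Nat.primeCounting (2 ^ l) = #((range (2 ^ l + 1)).filter Nat.Prime) := by
    rw [Nat.primeCounting, Nat.primeCounting', Nat.count_eq_card_filter_range]
  have h2 : Real.log (((2 ^ l : ℕ) : ℝ) + 1) ≤ (l + 1) * Real.log 2 := by
    rw [← Nat.cast_succ, ← Nat.cast_succ, ← Real.log_pow]
    apply Real.log_le_log (by positivity)
    have : 1 ≤ 2 ^ l := Nat.one_le_two_pow
    have : 2 ^ l + 1 ≤ 2 ^ (l + 1) := by rw [pow_succ]; omega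
    exact_mod_cast this
  have h3 : (4 : ℝ) * (l + 1) ≤ 3 * 2 ^ l := by
    have : 4 * (l + 1) ≤ 3 * 2 ^ l := by
      clear h1 hcount h2
      induction l, hl using Nat.le_induction with
      | base => norm_num
      | succ n hn ih =>
        rw [pow_succ]
        omega
    exact_mod_cast this
  rw [hcount] at h1
  set k := #((range (2 ^ l + 1)).filter Nat.Prime)
  push_cast at h1 h2
  rw [Real.log_pow] at h1
  have h4 : (2 : ℝ) ^ l - (l + 1) ≤ k * l :=
    le_of_mul_le_mul_right (by linarith) hlog2
  linarith

lemma card_filter_dvd_le_log {P : Finset ℕ} (hP : ∀ p ∈ P, p.Prime) {v : ℤ} (hv : v ≠ 0) {M : ℕ}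
    (hM : v.natAbs ≤ M) : #(P.filter fun q : ℕ => (q : ℤ) ∣ v) ≤ Nat.log 2 M := by
  have hv' : v.natAbs ≠ 0 := Int.natAbs_ne_zero.2 hv
  have hsub : (P.filter fun q : ℕ => (q : ℤ) ∣ v) ⊆ v.natAbs.primeFactors := by
    intro q hq
    rw [mem_filter] at hq
    exact Nat.mem_primeFactors.2 ⟨hP q hq.1, Int.natCast_dvd.1 hq.2, hv'⟩
  have hpow : 2 ^ #v.natAbs.primeFactors ≤ M :=
    calc 2 ^ #v.natAbs.primeFactors ≤ ∏ p ∈ v.natAbs.primeFactors, p :=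
          pow_card_le_prod _ _ _ fun p hp => (Nat.prime_of_mem_primeFactors hp).two_le
      _ ≤ v.natAbs := Nat.le_of_dvd (Nat.pos_of_ne_zero hv') (Nat.prod_primeFactors_dvd _)
      _ ≤ M := hM
  exact (card_le_card hsub).trans (Nat.le_log_of_pow_le one_lt_two hpow)

lemma exists_natLog_le {a : ℕ → ℕ} {γ C : ℝ} (hγ : 0 < γ) (hC : 0 < C)
    (ha_pos : ∀ n : ℕ, 1 ≤ n → 0 < a n)
    (hgrowth : ∀ n : ℕ, 1 ≤ n → (a n : ℝ) ≤ C * Real.exp (γ * (Real.log n) ^ 2)) (m : ℕ) :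
    ∃ c : ℝ, 0 ≤ c ∧ ∀ l : ℕ, 1 ≤ l → (1 + Nat.log 2 (a (2 ^ (m * l))) : ℝ) ≤ c * (l : ℝ) ^ 2 := by
  have hlog2 : 0 < Real.log 2 := Real.log_pos one_lt_two
  refine ⟨1 + |Real.log C| / Real.log 2 + γ * m ^ 2 * Real.log 2, by positivity, fun l hl => ?_⟩
  have hN : 1 ≤ 2 ^ (m * l) := Nat.one_le_two_pow
  set M := a (2 ^ (m * l)) with hM
  have hM0 : 0 < M := ha_pos _ hN
  have h1 : (Nat.log 2 M : ℝ) * Real.log 2 ≤ Real.log M := by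
    rw [← Real.log_pow]
    apply Real.log_le_log (by positivity)
    exact_mod_cast Nat.pow_log_le_self 2 hM0.ne'
  have h2 : Real.log M ≤ Real.log C + γ * (m * l * Real.log 2) ^ 2 := by
    have := Real.log_le_log (by exact_mod_cast hM0) (hgrowth _ hN)
    rw [Real.log_mul hC.ne' (Real.exp_ne_zero _), Real.log_exp] at this
    push_cast at this
    rw [Real.log_pow] at this
    push_cast at this
    exact this
  have hl2 : (1 : ℝ) ≤ (l : ℝ) ^ 2 := one_le_pow₀ (by exact_mod_cast hl)
  have h3 : (Nat.log 2 M : ℝ) ≤ |Real.log C| / Real.log 2 + γ * m ^ 2 * Real.log 2 * l ^ 2 := by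
    rw [← mul_le_mul_iff_left₀ hlog2, add_mul, div_mul_cancel₀ _ hlog2.ne']
    nlinarith [le_abs_self (Real.log C)]
  have h4 : 0 ≤ |Real.log C| / Real.log 2 := by positivity
  nlinarith [mul_nonneg h4 (sub_nonneg.2 hl2)]

lemma natAbs_le_of_mem_nonzeroDiffs {a : ℕ → ℕ} {N : ℕ}
    (ha : ∀ n, 1 ≤ n → n ≤ N → a n ≤ a N) {v : ℤ}
    (hv : v ∈ nonzeroDiffs ((Icc 1 N).image fun n => (a n : ℤ))) : v.natAbs ≤ a N := by
  obtain ⟨⟨x, y⟩, hxy, rfl⟩ := mem_image.1 (mem_of_mem_erase hv)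
  rw [mem_product] at hxy
  obtain ⟨n, hn, hnx⟩ := mem_image.1 hxy.1
  obtain ⟨n', hn', hny⟩ := mem_image.1 hxy.2
  rw [mem_Icc] at hn hn'
  have h1 := ha n hn.1 hn.2
  have h2 := ha n' hn'.1 hn'.2
  simp only at hnx hny ⊢
  omega

lemma exists_norm_sq_ge_of_norm_offDiagSum_le {A : Finset ℤ} {P : Finset ℕ} (hP : P.Nonempty)
    {t : ℝ} (h : ‖offDiagSum A P t‖ ≤ #P * #A / 2) :
    ∃ p ∈ P, (#A : ℝ) / 2 ≤ ‖∑ x ∈ A, unitExp (p * (x * t))‖ ^ 2 := by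
  by_contra! hcon
  have h1 := sum_lt_sum_of_nonempty hP hcon
  rw [sum_const, nsmul_eq_mul] at h1
  have h2 := congrArg Complex.re (sum_norm_sq_eq_add_offDiagSum A P t)
  rw [Complex.ofReal_re, Complex.add_re] at h2
  have h3 : ((#P * #A : ℂ)).re = #P * #A := by
    norm_cast
  have h4 := (abs_le.1 ((Complex.abs_re_le_norm (offDiagSum A P t)).trans h)).1
  rw [h3] at h2
  linarith

/-- Almost surely, for all large `l` the exponential sum of length `2 ^ (m l)` has square root size
at some prime multiple `p ≤ 2 ^ l` of `t`. -/
lemma ae_eventually_exists_prime {a : ℕ → ℕ} (ha : StrictMono fun n => a (n + 1))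
    (ha_pos : ∀ n : ℕ, 1 ≤ n → 0 < a n) {γ C : ℝ} (hγ : 0 < γ) (hC : 0 < C)
    (hgrowth : ∀ n : ℕ, 1 ≤ n → (a n : ℝ) ≤ C * Real.exp (γ * (Real.log n) ^ 2))
    (henergy : ∀ ε > 0, ∃ Cε : ℝ, ∀ N : ℕ, 1 ≤ N →
      (addEnergy ((Finset.Icc 1 N).image fun n => (a n : ℤ)) : ℝ) ≤ Cε * (N : ℝ) ^ ((2 : ℝ) + ε))
    {m : ℕ} (hm : m ≠ 0) (k : ℤ) :
    ∀ᵐ t ∂(volume.restrict (Set.Ioc (k : ℝ) (k + 1))), ∀ᶠ l : ℕ in atTop, ∃ p : ℕ, p.Prime ∧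
      p ≤ 2 ^ l ∧ ((2 : ℝ) ^ (m * l)) / 2
        ≤ ‖∑ n ∈ Icc 1 (2 ^ (m * l)), unitExp (p * (a n * t))‖ ^ 2 := by
  have hmono : ∀ n n', 1 ≤ n → n ≤ n' → a n ≤ a n' := by
    intro n n' hn hnn
    have := ha.monotone (Nat.sub_le_sub_right hnn 1)
    simpa [Nat.sub_add_cancel hn, Nat.sub_add_cancel (hn.trans hnn)] using this
  have hinj : ∀ N, Set.InjOn (fun n => (a n : ℤ)) (Icc 1 N : Finset ℕ) := by
    intro N n hn n' hn' h
    simp only [coe_Icc, Set.mem_Icc] at hn hn'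
    have h' : a (n - 1 + 1) = a (n' - 1 + 1) := by
      rw [Nat.sub_add_cancel hn.1, Nat.sub_add_cancel hn'.1]
      exact Nat.cast_injective h
    have := ha.injective h'
    omega
  obtain ⟨c, hc0, hc⟩ := exists_natLog_le hγ hC ha_pos hgrowth m
  have hm0 : (0 : ℝ) < m := by exact_mod_cast Nat.pos_of_ne_zero hm
  obtain ⟨E, hE⟩ := henergy (1 / (2 * m)) (by positivity)
  set A : ℕ → Finset ℤ := fun l => (Icc 1 (2 ^ (m * l))).image fun n => (a n : ℤ) with hA
  set P : ℕ → Finset ℕ := fun l => (range (2 ^ l + 1)).filter Nat.Prime with hPdef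
  have hP : ∀ l, ∀ p ∈ P l, p.Prime := fun l p hp => (mem_filter.1 hp).2
  have hcardA : ∀ l, (#(A l) : ℝ) = 2 ^ (m * l) := by
    intro l
    rw [hA, card_image_of_injOn (hinj _)]
    simp
  have hcardP : ∀ l, 2 ≤ l → 0 < (#(P l) : ℝ) := by
    intro l hl
    rw [Nat.cast_pos, card_pos]
    exact ⟨2, mem_filter.2 ⟨mem_range.2 (Nat.lt_succ_of_le
      (Nat.le_self_pow (by omega) 2)), Nat.prime_two⟩⟩
  set ρ : ℝ := 2 ^ (1 / 2 : ℝ) / 2 with hρ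
  have hρ0 : 0 ≤ ρ := by positivity
  have hρ1 : ρ < 1 := by
    rw [hρ, div_lt_one two_pos]
    simpa using Real.rpow_lt_rpow_of_exponent_lt one_lt_two (show (1 / 2 : ℝ) < 1 by norm_num)
  set f : ℕ → ℝ → ℝ := fun l t =>
    ‖offDiagSum (A (l + 2)) (P (l + 2)) t‖ ^ 2 / (#(P (l + 2)) * #(A (l + 2))) ^ 2 with hf
  set d : ℕ → ℝ := fun l => 4 * c * |E| * (((l + 2 : ℕ) : ℝ) ^ 3 * ρ ^ (l + 2)) with hd
  have hds : Summable d := by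
    refine Summable.mul_left _ ?_
    exact (summable_nat_add_iff (f := fun l : ℕ => (l : ℝ) ^ 3 * ρ ^ l) 2).2
      (summable_pow_mul_geometric_of_norm_lt_one 3 (by rwa [Real.norm_of_nonneg hρ0]))
  have hfm : ∀ l, Measurable (f l) := by
    intro l
    have := continuous_unitExp
    refine (Continuous.measurable ?_).div_const _
    unfold offDiagSum
    fun_prop
  have hle : ∀ l, ∫⁻ t in Set.Ioc (k : ℝ) (k + 1), ENNReal.ofReal (f l t)
      ≤ ENNReal.ofReal (d l) := by
    intro l
    set L := l + 2 with hL
    have hL2 : 2 ≤ L := by omega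
    have hp := hcardP L hL2
    have hN : (0 : ℝ) < 2 ^ (m * L) := by positivity
    have hmoment := lintegral_offDiagSum_le (A L) (hP L) (W := Nat.log 2 (a (2 ^ (m * L))))
      (fun v hv => card_filter_dvd_le_log (hP L) (ne_of_mem_erase hv)
        (natAbs_le_of_mem_nonzeroDiffs (fun n h1 h2 => hmono n _ h1 h2) hv)) k
    have hq0 : (0 : ℝ) ≤ ((#(P L) * #(A L) : ℝ) ^ 2)⁻¹ := by positivity
    have hfl : ∀ t, f l t = ((#(P L) * #(A L) : ℝ) ^ 2)⁻¹ * ‖offDiagSum (A L) (P L) t‖ ^ 2 :=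
      fun t => by simp only [hf]; rw [div_eq_mul_inv, mul_comm]
    simp_rw [hfl, ENNReal.ofReal_mul hq0]
    rw [lintegral_const_mul']
    swap
    · exact ENNReal.ofReal_ne_top
    refine (mul_le_mul_right hmoment _).trans ?_
    rw [← ENNReal.ofReal_mul hq0]
    apply ENNReal.ofReal_le_ofReal
    have hEn : (addEnergy (A L) : ℝ) ≤ |E| * ((2 ^ (m * L)) ^ 2 * (2 ^ (1 / 2 : ℝ)) ^ L) := by
      have h1 := hE (2 ^ (m * L)) Nat.one_le_two_pow
      refine h1.trans ?_
      push_cast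
      have h2 : ((2 : ℝ) ^ (m * L)) ^ (2 + 1 / (2 * (m : ℝ)))
          = (2 ^ (m * L)) ^ 2 * (2 ^ (1 / 2 : ℝ)) ^ L := by
        rw [Real.rpow_add hN]
        congr 1
        · norm_cast
        · rw [← Real.rpow_natCast, ← Real.rpow_natCast, ← Real.rpow_mul two_pos.le,
            ← Real.rpow_mul two_pos.le]
          congr 1
          push_cast
          field_simp
      rw [h2]
      gcongr
      exact le_abs_self E
    have hcnt := two_pow_le_card_primes hL2
    change (2 : ℝ) ^ L ≤ 4 * L * #(P L) at hcnt
    rw [hcardA L]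
    calc ((#(P L) * (2 : ℝ) ^ (m * L)) ^ 2)⁻¹ *
          (#(P L) * (1 + (Nat.log 2 (a (2 ^ (m * L))) : ℝ)) * addEnergy (A L))
        ≤ ((#(P L) * (2 : ℝ) ^ (m * L)) ^ 2)⁻¹ *
          (#(P L) * (c * (L : ℝ) ^ 2) * (|E| * ((2 ^ (m * L)) ^ 2 * (2 ^ (1 / 2 : ℝ)) ^ L))) := by
          gcongr
          exact hc L (by omega)
      _ = c * |E| * (L : ℝ) ^ 2 * (2 ^ (1 / 2 : ℝ)) ^ L * (1 / #(P L)) := by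
          field_simp
      _ ≤ c * |E| * (L : ℝ) ^ 2 * (2 ^ (1 / 2 : ℝ)) ^ L * (4 * L / 2 ^ L) := by
          gcongr ?_ * ?_
          rw [div_le_div_iff₀ hp (by positivity)]
          linarith
      _ = d l := by
          simp only [hd, hρ, div_pow]
          ring
  filter_upwards [ae_summable_of_lintegral_le hfm (fun l t => by positivity)
    (fun l => by positivity) hds hle] with t ht
  have hev := ht.tendsto_atTop_zero.eventually_lt_const (show (0 : ℝ) < 1 / 4 by norm_num)
  rw [eventually_atTop] at hev ⊢
  obtain ⟨l₀, hl₀⟩ := hev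
  refine ⟨l₀ + 2, fun L hL => ?_⟩
  have hlt := hl₀ (L - 2) (by omega)
  simp only [hf, show L - 2 + 2 = L by omega] at hlt
  have hp := hcardP L (by omega)
  have hA0 : (0 : ℝ) < #(A L) := by rw [hcardA]; positivity
  rw [div_lt_iff₀ (by positivity)] at hlt
  have hoff : ‖offDiagSum (A L) (P L) t‖ ≤ #(P L) * #(A L) / 2 := by
    refine (sq_le_sq₀ (norm_nonneg _) (by positivity)).1 ?_
    linarith
  obtain ⟨p, hpP, hpS⟩ := exists_norm_sq_ge_of_norm_offDiagSum_le
    (card_pos.1 (by exact_mod_cast hp)) hoff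
  refine ⟨p, hP L p hpP, Nat.lt_succ_iff.1 (mem_range.1 (mem_filter.1 hpP).1), ?_⟩
  rw [hcardA, hA, sum_image (hinj _)] at hpS
  simpa using hpS

lemma ae_frequently_le_mul_starDisc {a : ℕ → ℕ} (ha : StrictMono fun n => a (n + 1))
    (ha_pos : ∀ n : ℕ, 1 ≤ n → 0 < a n) {γ C : ℝ} (hγ : 0 < γ) (hC : 0 < C)
    (hgrowth : ∀ n : ℕ, 1 ≤ n → (a n : ℝ) ≤ C * Real.exp (γ * (Real.log n) ^ 2))
    (henergy : ∀ ε > 0, ∃ Cε : ℝ, ∀ N : ℕ, 1 ≤ N →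
      (addEnergy ((Finset.Icc 1 N).image fun n => (a n : ℤ)) : ℝ)
        ≤ Cε * (N : ℝ) ^ ((2 : ℝ) + ε)) :
    ∀ᵐ t ∂(volume : Measure ℝ), ∀ ε > 0, ∃ᶠ N : ℕ in atTop,
      (N : ℝ) * starDisc N (fun n => Int.fract ((a n : ℝ) * t)) ≥ (N : ℝ) ^ ((1 : ℝ) / 2 - ε) := by
  refine ae_volume_of_forall_Ioc fun k => ?_
  filter_upwards [ae_all_iff.2 fun m : ℕ => ae_eventually_exists_prime ha ha_pos hγ hC hgrowth
    henergy (m := m + 1) (by omega) k] with t ht ε hε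
  obtain ⟨m₀, hm₀⟩ := exists_nat_one_div_lt (show 0 < ε / 2 by positivity)
  set m := m₀ + 1 with hm
  have hm0 : (0 : ℝ) < m := by positivity
  have hmε : 2 / (m : ℝ) ≤ ε := by
    have : 1 / (m : ℝ) < ε / 2 := by rw [hm]; exact_mod_cast hm₀
    have h2 : 2 / (m : ℝ) = 2 * (1 / m) := by ring
    linarith
  have htend : Tendsto (fun l : ℕ => 2 ^ (m * l)) atTop atTop := by
    refine (tendsto_pow_atTop_atTop_of_one_lt one_lt_two).comp ?_
    exact tendsto_id.const_mul_atTop' (Nat.succ_pos m₀)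
  refine htend.frequently (Eventually.frequently ?_)
  filter_upwards [ht m₀, eventually_ge_atTop 4] with l hl hl4
  obtain ⟨p, hp, hpl, hS⟩ := hl
  have hkoksma := norm_sum_unitExp_le_starDisc (fun n => (a n : ℝ) * t)
    (pow_ne_zero (m * l) two_ne_zero) hp.ne_zero
  set D := ((2 ^ (m * l) : ℕ) : ℝ) * starDisc (2 ^ (m * l)) (fun n => Int.fract ((a n : ℝ) * t))
  have hN0 : (0 : ℝ) < 2 ^ (m * l) := by positivity
  have hN1 : (1 : ℝ) ≤ 2 ^ (m * l) := one_le_pow₀ one_le_two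
  push_cast
  set Y := ((2 : ℝ) ^ (m * l)) ^ ((1 : ℝ) / 2 - 2 / m) with hY
  have hY0 : 0 < Y := by positivity
  have hYsq : Y ^ 2 * (4 ^ l) ^ 2 = 2 ^ (m * l) := by
    rw [hY, show (4 : ℝ) = 2 ^ 2 by norm_num]
    simp only [← Real.rpow_natCast, ← Real.rpow_mul two_pos.le, ← Real.rpow_add two_pos]
    congr 1
    push_cast
    field_simp
    ring
  refine (Real.rpow_le_rpow_of_exponent_le hN1 (by linarith : 1 / 2 - ε ≤ 1 / 2 - 2 / m)).trans ?_
  change Y ≤ D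
  by_contra! hlt
  have hp2 : (p : ℝ) ≤ 2 ^ l := by exact_mod_cast hpl
  have hp0 : (0 : ℝ) < p := by exact_mod_cast hp.pos
  have hbound : ‖∑ n ∈ Icc 1 (2 ^ (m * l)), unitExp (p * (a n * t))‖ ≤ 8 * 2 ^ l * Y :=
    calc _ ≤ 2 * π * p * D := hkoksma
      _ ≤ 2 * π * p * Y := by gcongr
      _ ≤ 2 * 4 * 2 ^ l * Y := by
          gcongr
          exact Real.pi_le_four
      _ = _ := by ring
  have hsq : (2 : ℝ) ^ (m * l) / 2 ≤ 64 * 4 ^ l * Y ^ 2 := by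
    calc _ ≤ _ := hS
      _ ≤ (8 * 2 ^ l * Y) ^ 2 := by gcongr
      _ = 64 * (2 ^ 2) ^ l * Y ^ 2 := by rw [← pow_mul, mul_comm 2 l, pow_mul]; ring
      _ = _ := by norm_num
  rw [← hYsq] at hsq
  have h256 : (256 : ℝ) ≤ 4 ^ l := by
    calc (256 : ℝ) = 4 ^ 4 := by norm_num
      _ ≤ 4 ^ l := pow_le_pow_right₀ (by norm_num) hl4
  have h4 : (128 : ℝ) * 4 ^ l < (4 ^ l) ^ 2 := by nlinarith
  nlinarith [mul_lt_mul_of_pos_left h4 (pow_pos hY0 2)]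

end

theorem stmt1 (a : ℕ → ℕ)
    (ha_incr : ∀ n : ℕ, 1 ≤ n → a n < a (n + 1))
    (ha_pos : ∀ n : ℕ, 1 ≤ n → 0 < a n)
    (γ C : ℝ) (hγ : 0 < γ) (hC : 0 < C)
    (hgrowth : ∀ n : ℕ, 1 ≤ n → (a n : ℝ) ≤ C * Real.exp (γ * (Real.log n) ^ 2))
    (henergy : ∀ ε > 0, ∃ Cε : ℝ, ∀ N : ℕ, 1 ≤ N →
      (addEnergy ((Finset.Icc 1 N).image fun n => (a n : ℤ)) : ℝ) ≤ Cε * (N : ℝ) ^ ((2 : ℝ) + ε)) :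
    ∀ᵐ α ∂(volume : Measure ℝ),
      (∀ ε > 0, ∃ C'ε : ℝ, ∀ N : ℕ,
        (N : ℝ) * starDisc N (fun n => Int.fract ((a n : ℝ) * α)) ≤
          C'ε * (N : ℝ) ^ ((1 : ℝ) / 2 + ε)) ∧
      (∀ ε > 0, ∃ᶠ N : ℕ in atTop,
        (N : ℝ) * starDisc N (fun n => Int.fract ((a n : ℝ) * α)) ≥
          (N : ℝ) ^ ((1 : ℝ) / 2 - ε)) := by
  have ha : StrictMono fun n => a (n + 1) :=
    strictMono_nat_of_lt_succ fun n => ha_incr (n + 1) (by omega)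
  filter_upwards [ae_mul_starDisc_le ha,
    ae_frequently_le_mul_starDisc ha ha_pos hγ hC hgrowth henergy] with α h1 h2
  exact ⟨h1, h2⟩
end
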